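/- arXiv:1603.06639 — 2 statements merged into one kernel-verified Lean document; each statement's English description precedes it below -/
import Mathlib

section
/- Let (S, n) be a regular local ring of dimension e ≥ 1 containing a field, let P be a prime ideal of S with ht_S(P) = e − 1, and let g ∈ n be an element such that the ideal P + (g) is n-primary. Then there is a short exact sequence 0 → H_P^{e−1}(S) → (H_P^{e−1}(S))_g → H_n^e(S) → 0, where the first map is the natural localization map. -/
open CategoryTheory Opposite

noncomputable section

/-- Krull dimension of the support of a module. -/
def moduleSuppDim (R : Type) [CommRing R] (M : Type) [AddCommGroup M] [Module R M] :
    WithBot ℕ∞ :=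
  Order.krullDim (Module.support R M)

/-- `M` has injective dimension at most `n` (as `R`-module), characterized by
vanishing of `Ext^i(N, M)` for all `i > n`. -/
def injDimLE (R : Type) [CommRing R] (M : Type) [AddCommGroup M] [Module R M] (n : ℕ) : Prop :=
  ∀ (N : ModuleCat R) (i : ℕ), n < i →
    Subsingleton (((Ext R (ModuleCat R) i).obj (op N)).obj (ModuleCat.of R M))

/-- The injective dimension of `M` as an `R`-module, valued in `ℕ∞`. -/
def injDim (R : Type) [CommRing R] (M : Type) [AddCommGroup M] [Module R M] : ℕ∞ :=
  sInf {n : ℕ∞ | ∃ m : ℕ, (m : ℕ∞) = n ∧ injDimLE R M m}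

/-- The height of an ideal: the infimum of the heights of primes containing it. -/
def idealHeight (R : Type) [CommRing R] (I : Ideal R) : ℕ∞ :=
  sInf {h : ℕ∞ | ∃ p : PrimeSpectrum R, I ≤ p.asIdeal ∧ Order.height p = h}

/-- A regular local ring: a Noetherian local ring whose maximal ideal can be generated
by `dim R` elements. -/
def IsRegularLocal (R : Type) [CommRing R] [IsLocalRing R] : Prop :=
  IsNoetherianRing R ∧
    ∃ s : Finset R, Ideal.span (s : Set R) = IsLocalRing.maximalIdeal R ∧
      (s.card : WithBot ℕ∞) = ringKrullDim R

/-- A ring contains a field if some subring of it is a field. -/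
def ContainsField (R : Type) [CommRing R] : Prop :=
  ∃ k : Subring R, IsField k

/-- The underlying module of the `i`-th local cohomology of `R` with support in `I`. -/
abbrev LocalCohomologyMod (R : Type) [CommRing R] (I : Ideal R) (i : ℕ) : Type :=
  (localCohomology I i).obj (ModuleCat.of R R)

end

/-!
Write `P^(t)` for the `t`-th symbolic power of `P`. As `dim S/P = 1`, the powers of `P` and the
symbolic powers of `P` are cofinal: in the completion of `S`, a complete local domain, the symbolic
powers of a prime over `P` intersect in zero, so by Chevalley's theorem they lie in arbitrarily high
powers of the maximal ideal, and the Artin-Rees lemma turns this into `P^(t) ≤ P^k`. Since `P^(t)`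
is `P`-primary and `g ∉ P`, `g^t` is a nonzerodivisor on `S/P^(t)`. The ideals `P^(t) + (g^t)` are
`n`-primary, so `Ext^i(S/(P^(t) + (g^t)), S)` vanishes for `i ≠ e`, and by Nakayama's lemma so does
`Ext^e(S/P^(t), S)`. The long exact sequence of `Ext` is then the short exact sequence
`0 → Ext^{e-1}(S/P^(t), S) → Ext^{e-1}(S/P^(t), S) → Ext^e(S/(P^(t) + (g^t)), S) → 0` whose first
map is multiplication by `g^t`. The transition maps of the middle terms pick up the factors
`g^(t'-t)`, so in the limit over `t` these terms become the localization of `H_P^{e-1}(S)` at `g`.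
-/

section LocalRing

open IsLocalRing

theorem isLocalRing_quotient_span_singleton {R : Type*} [CommRing R] [IsLocalRing R] {y : R}
    (hy : y ∈ maximalIdeal R) : IsLocalRing (R ⧸ Ideal.span {y}) :=
  have : Nontrivial (R ⧸ Ideal.span {y}) :=
    Ideal.Quotient.nontrivial_iff.mpr fun h ↦ hy (Ideal.span_singleton_eq_top.mp h)
  .of_surjective' (Ideal.Quotient.mk _) Ideal.Quotient.mk_surjective

theorem exists_span_insert_sdiff_eq_span {R M : Type*} [CommRing R] [IsLocalRing R]
    [AddCommGroup M] [Module R M] {s : Set M} {y : M} (hy : y ∈ Submodule.span R s)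
    (hy' : y ∉ maximalIdeal R • Submodule.span R s) :
    ∃ z ∈ s, Submodule.span R (insert y (s \ {z})) = Submodule.span R s := by
  classical
  obtain ⟨c, hcs, rfl⟩ := Submodule.mem_span_set.mp hy
  obtain ⟨z, hz, hcz⟩ : ∃ z ∈ c.support, c z ∉ maximalIdeal R := by
    by_contra! h
    exact hy' (Submodule.sum_mem _ fun z hz ↦
      Submodule.smul_mem_smul (h z hz) (Submodule.subset_span (hcs hz)))
  obtain ⟨u, hu⟩ : IsUnit (c z) := by simpa using hcz
  have hzs : z ∈ s := hcs hz
  set N := Submodule.span R (insert (c.sum fun x r ↦ r • x) (s \ {z})) with hN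
  refine ⟨z, hzs, le_antisymm (Submodule.span_le.mpr ?_) (Submodule.span_le.mpr fun x hx ↦ ?_)⟩
  · exact Set.insert_subset hy (Set.sdiff_subset.trans Submodule.subset_span)
  have mem_of_ne {x : M} (hx : x ∈ s) (hxz : x ≠ z) : x ∈ N :=
    Submodule.subset_span (.inr ⟨hx, hxz⟩)
  rcases eq_or_ne x z with rfl | hxz
  · have hsum := Finset.add_sum_erase c.support (fun x ↦ c x • x) hz
    have : c x • x ∈ N := by
      rw [eq_sub_of_add_eq hsum]
      exact N.sub_mem (Submodule.subset_span (.inl rfl)) (N.sum_mem fun w hw ↦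
        N.smul_mem _ (mem_of_ne (hcs (Finset.mem_of_mem_erase hw)) (Finset.ne_of_mem_erase hw)))
    simpa [← hu, ← mul_smul] using N.smul_mem (↑u⁻¹ : R) this
  · exact mem_of_ne hx hxz

theorem exists_span_insert_eq_of_notMem_smul {R M : Type*} [CommRing R] [IsLocalRing R]
    [AddCommGroup M] [Module R M] {N : Submodule R M} (hN : N.FG) {y : M} (hy : y ∈ N)
    (hy' : y ∉ maximalIdeal R • N) :
    ∃ s : Set M, s.Finite ∧ s.ncard + 1 = N.spanFinrank ∧ Submodule.span R (insert y s) = N := by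
  obtain ⟨s, hcard, rfl⟩ := hN.exists_span_finset_card_eq_spanFinrank
  obtain ⟨z, hz, hspan⟩ := exists_span_insert_sdiff_eq_span hy hy'
  exact ⟨s \ {z}, s.finite_toSet.sdiff, by
    rw [Set.ncard_sdiff_singleton_add_one hz s.finite_toSet, Set.ncard_coe_finset, hcard], hspan⟩

theorem le_ringKrullDim_quotient_span_singleton {R : Type*} [CommRing R] [IsLocalRing R]
    [IsNoetherianRing R] {y : R} (hy : y ∈ maximalIdeal R) {d : ℕ}
    (hd : (d + 1 : ℕ) ≤ ringKrullDim R) : d ≤ ringKrullDim (R ⧸ Ideal.span {y}) := by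
  have := isLocalRing_quotient_span_singleton hy
  have h := hd.trans (maximalIdeal_height_eq_ringKrullDim (R := R) ▸
    Ideal.height_le_ringKrullDim_quotient_add_one hy)
  rw [← maximalIdeal_height_eq_ringKrullDim] at h ⊢
  norm_cast at h ⊢
  exact (ENat.add_le_add_iff_right ENat.one_ne_top).mp (mod_cast h)

theorem spanFinrank_maximalIdeal_quotient_span_singleton_le {R : Type*} [CommRing R] [IsLocalRing R]
    {y : R} {s : Set R} (hs : s.Finite) (hspan : Ideal.span (insert y s) = maximalIdeal R)
    [IsLocalRing (R ⧸ Ideal.span {y})] :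
    (maximalIdeal (R ⧸ Ideal.span {y})).spanFinrank ≤ s.ncard := by
  have : maximalIdeal (R ⧸ Ideal.span {y}) =
      Submodule.span (R ⧸ Ideal.span {y}) (Ideal.Quotient.mk _ '' s) := by
    rw [← map_maximalIdeal_of_surjective _ Ideal.Quotient.mk_surjective, ← hspan,
      Ideal.span_insert, Ideal.map_sup, Ideal.map_quotient_self, bot_sup_eq, Ideal.map_span]
  rw [this]
  exact (Submodule.spanFinrank_span_le_ncard_of_finite (hs.image _)).trans (Set.ncard_image_le hs)

theorem isRegularLocalRing_quotient_span_singleton {R : Type*} [CommRing R] [IsLocalRing R]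
    [IsNoetherianRing R] {y : R} {s : Set R} (hs : s.Finite)
    (hspan : Ideal.span (insert y s) = maximalIdeal R)
    (hdim : (s.ncard + 1 : ℕ) ≤ ringKrullDim R) : IsRegularLocalRing (R ⧸ Ideal.span {y}) := by
  have hy : y ∈ maximalIdeal R := hspan ▸ Ideal.subset_span (.inl rfl)
  have := isLocalRing_quotient_span_singleton hy
  refine .of_spanFinrank_maximalIdeal_le _ (le_trans ?_
    (le_ringKrullDim_quotient_span_singleton hy hdim))
  exact_mod_cast spanFinrank_maximalIdeal_quotient_span_singleton_le hs hspan

theorem exists_mem_maximalIdeal_notMem_sq_notMem_minimalPrimes {R : Type*} [CommRing R]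
    [IsLocalRing R] [IsNoetherianRing R] (hdim : ringKrullDim R ≠ 0) :
    ∃ y ∈ maximalIdeal R, y ∉ maximalIdeal R ^ 2 ∧ ∀ q ∈ minimalPrimes R, y ∉ q := by
  have hfin := minimalPrimes.finite_of_isNoetherianRing R
  by_contra! h
  have hcover : (maximalIdeal R : Set R) ⊆
      ⋃ I ∈ (↑(insert (maximalIdeal R ^ 2) hfin.toFinset) : Set (Ideal R)), I := by
    intro y hy
    simp only [Finset.coe_insert, Set.Finite.coe_toFinset, Set.biUnion_insert]
    by_cases hy2 : y ∈ maximalIdeal R ^ 2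
    · exact .inl hy2
    · exact .inr (by simpa using h y hy hy2)
  obtain ⟨I, hI, hle⟩ := (Ideal.subset_union_prime (f := id) (maximalIdeal R ^ 2)
    (maximalIdeal R ^ 2) fun I hI hne _ ↦
      (hfin.mem_toFinset.mp (Finset.mem_of_mem_insert_of_ne hI hne)).1.1).mp hcover
  rcases Finset.mem_insert.mp hI with rfl | hI
  · have : maximalIdeal R = ⊥ := Submodule.eq_bot_of_le_smul_of_le_jacobson_bot (maximalIdeal R) _
      (IsNoetherian.noetherian _) (by rwa [smul_eq_mul, ← pow_two]) (maximalIdeal_le_jacobson _)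
    exact hdim (ringKrullDim_eq_zero_of_isField (isField_iff_maximalIdeal_eq.mpr this))
  · have hmin : I ∈ minimalPrimes R := hfin.mem_toFinset.mp hI
    have := hmin.1.1
    have : I = maximalIdeal R := le_antisymm (le_maximalIdeal this.ne_top) hle
    rw [← maximalIdeal_height_eq_ringKrullDim, ← this, Ideal.height_eq_zero_iff.mpr hmin] at hdim
    exact hdim rfl

theorem isDomain_of_isPrime_span_singleton {R : Type*} [CommRing R] [IsLocalRing R]
    [IsNoetherianRing R] {y : R} (hy : y ∈ maximalIdeal R) (hmin : ∀ q ∈ minimalPrimes R, y ∉ q)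
    [hprime : (Ideal.span {y}).IsPrime] : IsDomain R := by
  obtain ⟨q, hq, hqy⟩ := Ideal.exists_minimalPrimes_le (I := ⊥) (J := Ideal.span {y}) bot_le
  have : q.IsPrime := hq.1.1
  have hq_le : q ≤ maximalIdeal R • q := by
    intro z hz
    obtain ⟨a, rfl⟩ := Ideal.mem_span_singleton'.mp (hqy hz)
    rw [mul_comm]
    exact Ideal.mul_mem_mul hy ((this.mem_or_mem hz).resolve_right (hmin q hq))
  obtain rfl : q = ⊥ := Submodule.eq_bot_of_le_smul_of_le_jacobson_bot (maximalIdeal R) _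
    (IsNoetherian.noetherian _) hq_le (maximalIdeal_le_jacobson _)
  exact IsDomain.of_bot_isPrime R

theorem isDomain_of_isRegularLocalRing (R : Type*) [CommRing R] [IsRegularLocalRing R] :
    IsDomain R := by
  obtain ⟨d, hd⟩ : ∃ d, (maximalIdeal R).spanFinrank ≤ d := ⟨_, le_rfl⟩
  induction d generalizing R with
  | zero =>
    have := (Submodule.spanFinrank_eq_zero_iff_eq_bot (IsNoetherian.noetherian _)).mp
      (Nat.le_zero.mp hd)
    exact (isField_iff_maximalIdeal_eq.mpr this).isDomain
  | succ d ih =>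
    by_cases hdim : ringKrullDim R = 0
    · exact ih R ((Nat.cast_eq_zero.mp
        (IsRegularLocalRing.spanFinrank_maximalIdeal.trans hdim)).trans_le d.zero_le)
    obtain ⟨y, hy, hy2, hmin⟩ := exists_mem_maximalIdeal_notMem_sq_notMem_minimalPrimes hdim
    obtain ⟨s, hs, hcard, hspan⟩ := exists_span_insert_eq_of_notMem_smul
      (IsNoetherian.noetherian _) hy (by rwa [smul_eq_mul, ← pow_two])
    have : IsRegularLocalRing (R ⧸ Ideal.span {y}) := isRegularLocalRing_quotient_span_singleton
      hs hspan (by rw [hcard, IsRegularLocalRing.spanFinrank_maximalIdeal])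
    have := ih (R ⧸ Ideal.span {y}) (by
      have := spanFinrank_maximalIdeal_quotient_span_singleton_le hs hspan
      omega)
    have : (Ideal.span {y}).IsPrime := (Ideal.Quotient.isDomain_iff_prime _).mp this
    exact isDomain_of_isPrime_span_singleton hy hmin

theorem ne_zero_of_span_insert_eq_of_ncard_lt {R M : Type*} [Semiring R] [AddCommMonoid M]
    [Module R M] {N : Submodule R M} {y : M} {s : Set M} (hs : s.Finite)
    (hspan : Submodule.span R (insert y s) = N) (hcard : s.ncard < N.spanFinrank) : y ≠ 0 := by
  rintro rfl
  rw [← hspan, Submodule.span_insert_zero] at hcard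
  exact (Submodule.spanFinrank_span_le_ncard_of_finite hs).not_gt hcard

open RingTheory.Sequence in
theorem isWeaklyRegular_of_ofList_eq_maximalIdeal {R : Type*} [CommRing R] [IsRegularLocalRing R]
    {l : List R} (hl : Ideal.ofList l = maximalIdeal R)
    (hlen : l.length ≤ (maximalIdeal R).spanFinrank) : IsWeaklyRegular R l := by
  classical
  induction h : l.length generalizing R l with
  | zero => exact List.length_eq_zero_iff.mp h ▸ IsWeaklyRegular.nil R R
  | succ d ih =>
  obtain _ | ⟨y, l⟩ := l
  · simp at h
  have hspan : Ideal.span (insert y (l.toFinset : Set R)) = maximalIdeal R := by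
    rw [← hl, List.coe_toFinset, Ideal.ofList_cons, Ideal.span_insert]
  have hy : y ∈ maximalIdeal R := hspan ▸ Ideal.subset_span (.inl rfl)
  have hcard : (l.toFinset : Set R).ncard ≤ l.length :=
    (Set.ncard_coe_finset _).trans_le l.toFinset_card_le
  have hdim : (l.length + 1 : ℕ) ≤ ringKrullDim R := by
    rw [← IsRegularLocalRing.spanFinrank_maximalIdeal]
    exact_mod_cast hlen
  have : IsRegularLocalRing (R ⧸ Ideal.span {y}) := isRegularLocalRing_quotient_span_singleton
    l.toFinset.finite_toSet hspan (le_trans (by exact_mod_cast Nat.succ_le_succ hcard) hdim)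
  have hmap : Ideal.ofList (l.map (Ideal.Quotient.mk (Ideal.span {y}))) =
      maximalIdeal (R ⧸ Ideal.span {y}) := by
    rw [← map_maximalIdeal_of_surjective _ Ideal.Quotient.mk_surjective, ← hl, ← Ideal.map_ofList,
      Ideal.ofList_cons, Ideal.map_sup, Ideal.map_quotient_self, bot_sup_eq]
  have hreg := ih hmap (by
    have := le_ringKrullDim_quotient_span_singleton hy hdim
    rw [← IsRegularLocalRing.spanFinrank_maximalIdeal] at this
    simpa using this) (by simpa using h)
  have hy0 : y ≠ 0 := ne_zero_of_span_insert_eq_of_ncard_lt l.toFinset.finite_toSet hspan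
    (hcard.trans_lt hlen)
  have := isDomain_of_isRegularLocalRing R
  have e : (R ⧸ Ideal.span {y}) ≃ₗ[R] QuotSMulTop y R := Submodule.quotEquivOfEq _ _ (by
    rw [← Submodule.ideal_span_singleton_smul, smul_eq_mul, Ideal.mul_top])
  exact .cons (.of_ne_zero hy0) ((e.isWeaklyRegular_congr l).mp
    ((isWeaklyRegular_map_algebraMap_iff (R ⧸ Ideal.span {y}) (R ⧸ Ideal.span {y}) l).mp hreg))

end LocalRing

section Completion

theorem exists_ringHom_adicCompletion_comp_algebraMap_eq {A B : Type*} [CommRing A] [CommRing B]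
    {I : Ideal A} {J : Ideal B} [IsAdicComplete J B] {f : A →+* B} (hf : I.map f ≤ J) :
    ∃ F : AdicCompletion I A →+* B, F.comp (algebraMap A (AdicCompletion I A)) = f := by
  have hpow (n : ℕ) : I ^ n ≤ (J ^ n).comap f :=
    (Ideal.pow_right_mono (Ideal.map_le_iff_le_comap.mp hf) n).trans (Ideal.le_comap_pow f n)
  let φ (n : ℕ) : AdicCompletion I A →+* B ⧸ J ^ n :=
    (Ideal.quotientMap (J ^ n) f (hpow n)).comp (AdicCompletion.evalₐ I n : _ →+* A ⧸ I ^ n)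
  have hφ {m n : ℕ} (h : m ≤ n) : (Ideal.Quotient.factorPow J h).comp (φ n) = φ m := by
    ext x
    obtain ⟨x, rfl⟩ := AdicCompletion.mk_surjective I A x
    have := congrArg (Ideal.quotientMap (J ^ m) f (hpow m)) (AdicCompletion.Ideal.mk_eq_mk I h x)
    simpa [φ] using this
  refine ⟨IsAdicComplete.liftRingHom J φ hφ, RingHom.ext fun x ↦ ?_⟩
  refine (IsHausdorff.eq_iff_smodEq (I := J)).mpr fun n ↦ ?_
  have : Ideal.Quotient.mk (J ^ n) (IsAdicComplete.liftRingHom J φ hφ (algebraMap A _ x)) =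
      Ideal.Quotient.mk (J ^ n) (f x) := by
    simp [φ, AdicCompletion.algebraMap_apply]
  rw [SModEq.sub_mem]
  simpa using Ideal.Quotient.eq.mp this

theorem isNoetherianRing_of_surjective_mk_comp {A B : Type*} [CommRing A] [CommRing B]
    {I : Ideal A} [IsNoetherianRing (AdicCompletion I A)] (hI : I.FG) {f : A →+* B}
    [IsAdicComplete (I.map f) B]
    (hf : Function.Surjective ((Ideal.Quotient.mk (I.map f)).comp f)) : IsNoetherianRing B := by
  obtain ⟨F, hF⟩ := exists_ringHom_adicCompletion_comp_algebraMap_eq (le_refl (I.map f))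
  have hmap : (I.map (algebraMap A (AdicCompletion I A))).map F = I.map f := by
    rw [Ideal.map_map, hF]
  have := AdicCompletion.isAdicComplete_self I hI
  have : IsHausdorff ((I.map (algebraMap A (AdicCompletion I A))).map F) B := by
    rw [hmap]; infer_instance
  refine isNoetherianRing_of_surjective _ B F (surjective_of_mk_map_comp_surjective
    (I := I.map (algebraMap A (AdicCompletion I A))) F fun z ↦ ?_)
  obtain ⟨x, hx⟩ := hf (Ideal.quotEquivOfEq hmap z)
  refine ⟨algebraMap A _ x, (Ideal.quotEquivOfEq hmap).injective ?_⟩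
  exact (congrArg (Ideal.Quotient.mk _) (RingHom.congr_fun hF x)).trans hx

theorem isNoetherianRing_adicCompletion {R : Type*} [CommRing R] [IsNoetherianRing R]
    (I : Ideal R) : IsNoetherianRing (AdicCompletion I R) := by
  obtain ⟨s, rfl⟩ := IsNoetherian.noetherian I
  set I := Ideal.span (s : Set R)
  let J := MvPolynomial.idealOfVars s R
  let f : MvPolynomial s R →+* AdicCompletion I R :=
    (MvPolynomial.aeval fun i : s ↦ algebraMap R (AdicCompletion I R) i).toRingHom
  have hJ : J.map f = I.map (algebraMap R (AdicCompletion I R)) := by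
    simp only [J, I, f, MvPolynomial.idealOfVars, Ideal.map_span, ← Set.range_comp]
    congr 1
    ext x
    simp
  have : IsNoetherianRing (AdicCompletion J (MvPolynomial s R)) :=
    isNoetherianRing_of_ringEquiv _ (MvPowerSeries.toAdicCompletionAlgEquiv s R).toRingEquiv
  have : IsAdicComplete (J.map f) (AdicCompletion I R) := by
    rw [hJ]; exact AdicCompletion.isAdicComplete_self I (IsNoetherian.noetherian I)
  refine isNoetherianRing_of_surjective_mk_comp (f := f) (IsNoetherian.noetherian J) fun z ↦ ?_
  obtain ⟨z, rfl⟩ := Ideal.Quotient.mk_surjective z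
  obtain ⟨r, hr⟩ := Ideal.Quotient.mk_surjective (AdicCompletion.evalOneₐ I z)
  refine ⟨MvPolynomial.C r, Ideal.Quotient.eq.mpr ?_⟩
  have hC : f (MvPolynomial.C r) = algebraMap R _ r := MvPolynomial.algHom_C _ r
  rw [hJ, ← AdicCompletion.ker_evalOneₐ_eq_map I (IsNoetherian.noetherian I), RingHom.mem_ker,
    map_sub, hC, sub_eq_zero]
  exact (AdicCompletion.evalOneₐ_of I r).trans hr

open IsLocalRing

instance isRegularLocalRing_adicCompletion {R : Type*} [CommRing R] [IsRegularLocalRing R] :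
    IsRegularLocalRing (AdicCompletion (maximalIdeal R) R) := by
  have := isNoetherianRing_adicCompletion (maximalIdeal R)
  have : Module.Flat R (AdicCompletion (maximalIdeal R) R) := AdicCompletion.flat_of_isNoetherian _
  have : (maximalIdeal (AdicCompletion (maximalIdeal R) R)).LiesOver (maximalIdeal R) :=
    ⟨(maximalIdeal_comap (algebraMap R (AdicCompletion (maximalIdeal R) R))).symm⟩
  refine IsRegularLocalRing.of_spanFinrank_maximalIdeal_le _ ?_
  rw [AdicCompletion.spanFinrank_maximalIdeal_eq,
    IsRegularLocalRing.spanFinrank_maximalIdeal, ← maximalIdeal_height_eq_ringKrullDim,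
    ← maximalIdeal_height_eq_ringKrullDim, Ideal.height_eq_height_add_of_liesOver_of_hasGoingDown
      (maximalIdeal R) (maximalIdeal (AdicCompletion (maximalIdeal R) R))]
  exact_mod_cast le_self_add

end Completion

section Chevalley

open IsLocalRing

theorem exists_mem_iInf_sub_mem_pow {R : Type*} [CommRing R] {I : Ideal R} [IsPrecomplete I R]
    {K : ℕ → Ideal R} (hK : Antitone K) (hpow : ∀ n, I ^ n ≤ K n)
    (hsucc : ∀ n, K n ≤ K (n + 1) ⊔ I ^ n) {n : ℕ} {x : R} (hx : x ∈ K n) :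
    ∃ y ∈ ⨅ i, K i, x - y ∈ I ^ n := by
  have exists_next (j : ℕ) (z : K (n + j)) : ∃ w : K (n + (j + 1)), (z - w : R) ∈ I ^ (n + j) := by
    obtain ⟨w, hw, v, hv, hwv⟩ := Submodule.mem_sup.mp (hsucc _ z.2)
    exact ⟨⟨w, hw⟩, by simpa [← hwv] using hv⟩
  choose next hnext using exists_next
  let u (j : ℕ) : K (n + j) := Nat.rec ⟨x, hx⟩ next j
  have hu (i j : ℕ) : (u i).1 - (u (i + j)).1 ∈ I ^ (n + i) := by
    induction j with
    | zero => simp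
    | succ j ih =>
      have hij := Ideal.pow_le_pow_right (show n + i ≤ n + (i + j) by omega)
        (hnext (i + j) (u (i + j)))
      have := add_mem ih hij
      rwa [sub_add_sub_cancel] at this
  obtain ⟨y, hy⟩ := IsPrecomplete.prec' (I := I) (fun j ↦ (u j).1) fun {i j} hij ↦ by
    obtain ⟨j, rfl⟩ := Nat.exists_eq_add_of_le hij
    simpa [SModEq.sub_mem] using Ideal.pow_le_pow_right (Nat.le_add_left i n) (hu i j)
  have hlim (j : ℕ) : (u j).1 - y ∈ I ^ (n + j) := by
    have hjn : (u (j + n)).1 - y ∈ I ^ (n + j) := by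
      simpa [add_comm] using SModEq.sub_mem.mp (hy (j + n))
    simpa using add_mem (hu j n) hjn
  refine ⟨y, (Ideal.mem_iInf).mpr fun j ↦ hK (Nat.le_add_left j n) ?_, hlim 0⟩
  simpa using sub_mem (u j).2 (hpow _ (hlim j))

variable {R : Type*} [CommRing R] [IsLocalRing R] [IsNoetherianRing R]

theorem iInf_sup_maximalIdeal_pow (J : Ideal R) : ⨅ n, J ⊔ maximalIdeal R ^ n = J := by
  refine le_antisymm (fun x hx ↦ ?_) (le_iInf fun n ↦ le_sup_left)
  refine Ideal.Quotient.eq_zero_iff_mem.mp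
    (IsHausdorff.haus' (I := maximalIdeal R) (M := R ⧸ J) _ fun n ↦ ?_)
  obtain ⟨y, hy, z, hz, hyz⟩ := Submodule.mem_sup.mp (Ideal.mem_iInf.mp hx n)
  have hxz : Ideal.Quotient.mk J x = z • (1 : R ⧸ J) := by
    rw [← hyz, map_add, Ideal.Quotient.eq_zero_iff_mem.mpr hy, zero_add, Algebra.smul_def, mul_one,
      Ideal.Quotient.algebraMap_eq]
  rw [SModEq.zero, hxz]
  exact Submodule.smul_mem_smul hz trivial

theorem isArtinianRing_quotient_maximalIdeal_pow (n : ℕ) :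
    IsArtinianRing (R ⧸ maximalIdeal R ^ n) := by
  rcases Nat.eq_zero_or_pos n with rfl | hn
  · have : Subsingleton (R ⧸ maximalIdeal R ^ 0) := by
      rw [pow_zero, Ideal.one_eq_top]; infer_instance
    infer_instance
  · refine quotient_artinian_of_mem_minimalPrimes_of_isLocalRing _ ?_
    rw [← Ideal.radical_minimalPrimes, Ideal.radical_pow _ hn.ne',
      (maximalIdeal.isMaximal R).isPrime.radical, Ideal.minimalPrimes_eq_subsingleton_self]
    exact Set.mem_singleton _

theorem exists_forall_ge_sup_maximalIdeal_pow_eq {J : ℕ → Ideal R} (hJ : Antitone J) (n : ℕ) :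
    ∃ k, ∀ j, k ≤ j → J k ⊔ maximalIdeal R ^ n = J j ⊔ maximalIdeal R ^ n := by
  have := isArtinianRing_quotient_maximalIdeal_pow (R := R) n
  let π := Ideal.Quotient.mk (maximalIdeal R ^ n)
  obtain ⟨k, hk⟩ := IsArtinian.monotone_stabilizes (R := R ⧸ maximalIdeal R ^ n)
    ⟨fun j ↦ OrderDual.toDual ((J j).map π), fun _ _ hij ↦ Ideal.map_mono (hJ hij)⟩
  refine ⟨k, fun j hj ↦ ?_⟩
  have hkj : ((J k).map π).comap π = ((J j).map π).comap π := congrArg (Ideal.comap π) (hk j hj)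
  simpa [π, Ideal.comap_map_of_surjective' _ Ideal.Quotient.mk_surjective] using hkj

theorem exists_le_maximalIdeal_pow_of_iInf_eq_bot [IsPrecomplete (maximalIdeal R) R]
    {J : ℕ → Ideal R} (hJ : Antitone J) (hbot : ⨅ k, J k = ⊥) (n : ℕ) :
    ∃ k, J k ≤ maximalIdeal R ^ n := by
  let K (n : ℕ) : Ideal R := ⨅ k, J k ⊔ maximalIdeal R ^ n
  have hK : Antitone K := fun _ _ h ↦ iInf_mono fun _ ↦ sup_le_sup_left (Ideal.pow_le_pow_right h) _
  have hbot' : ⨅ i, K i = ⊥ := by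
    rw [iInf_comm, ← hbot]
    exact iInf_congr fun k ↦ iInf_sup_maximalIdeal_pow (J k)
  have hstable (n : ℕ) : ∃ k, J k ≤ K n := by
    obtain ⟨k, hk⟩ := exists_forall_ge_sup_maximalIdeal_pow_eq hJ n
    refine ⟨k, le_iInf fun j ↦ ?_⟩
    rcases le_total k j with hkj | hjk
    · exact le_sup_left.trans (hk j hkj).le
    · exact (hJ hjk).trans le_sup_left
  have hsucc (n : ℕ) : K n ≤ K (n + 1) ⊔ maximalIdeal R ^ n := by
    obtain ⟨k, hk⟩ := hstable (n + 1)
    exact (iInf_le _ k).trans (sup_le_sup_right hk _)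
  obtain ⟨k, hk⟩ := hstable n
  refine ⟨k, fun x hx ↦ ?_⟩
  obtain ⟨y, hy, hxy⟩ :=
    exists_mem_iInf_sub_mem_pow hK (fun n ↦ le_iInf fun _ ↦ le_sup_right) hsucc (hk hx)
  rw [hbot', Ideal.mem_bot] at hy
  simpa [hy] using hxy

end Chevalley

section SymbolicPower

open IsLocalRing

variable {R : Type*} [CommRing R]

theorem exists_maximalIdeal_pow_le_pow_sup_span_singleton [IsLocalRing R] [IsNoetherianRing R]
    {P : Ideal R} (hP : ∀ q : Ideal R, q.IsPrime → P < q → q = maximalIdeal R) {u : R} (hu : u ∉ P)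
    (n : ℕ) : ∃ c, maximalIdeal R ^ c ≤ P ^ n ⊔ Ideal.span {u} := by
  refine Ideal.exists_pow_le_of_le_radical_of_fg ?_ (IsNoetherian.noetherian _)
  rw [Ideal.radical_eq_sInf]
  refine le_sInf fun q ⟨hq, hqp⟩ ↦ ?_
  have hPq : P < q := SetLike.lt_iff_le_and_exists.mpr ⟨hqp.le_of_pow_le (le_sup_left.trans hq), u,
    hq (Ideal.mem_sup_right (Ideal.mem_span_singleton_self u)), hu⟩
  exact (hP q hqp hPq).ge

/-- The `n`-th symbolic power of a prime ideal `P`: the contraction to `R` of the `n`-th power of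
the maximal ideal of `R` localized at `P`. -/
def symbolicPower (P : Ideal R) [P.IsPrime] (n : ℕ) : Ideal R :=
  ((P ^ n).map (algebraMap R (Localization.AtPrime P))).comap
    (algebraMap R (Localization.AtPrime P))

variable (P : Ideal R) [P.IsPrime]

theorem mem_symbolicPower_iff {n : ℕ} {x : R} :
    x ∈ symbolicPower P n ↔ ∃ s ∉ P, s * x ∈ P ^ n :=
  IsLocalization.algebraMap_mem_map_algebraMap_iff P.primeCompl _ _ _

theorem symbolicPower_antitone : Antitone (symbolicPower P) :=
  fun _ _ h ↦ Ideal.comap_mono (Ideal.map_mono (Ideal.pow_le_pow_right h))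

theorem pow_le_symbolicPower (n : ℕ) : P ^ n ≤ symbolicPower P n :=
  Ideal.le_comap_map

theorem le_radical_symbolicPower (n : ℕ) : P ≤ (symbolicPower P n).radical :=
  fun _ hx ↦ ⟨n, pow_le_symbolicPower P n (Ideal.pow_mem_pow hx n)⟩

variable {P}

theorem isSMulRegular_quotient_symbolicPower {a : R} (ha : a ∉ P) (n : ℕ) :
    IsSMulRegular (R ⧸ symbolicPower P n) a := by
  refine IsSMulRegular.of_right_eq_zero_of_smul fun x hx ↦ ?_
  obtain ⟨x, rfl⟩ := Ideal.Quotient.mk_surjective x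
  obtain ⟨s, hs, hsx⟩ := (mem_symbolicPower_iff P).mp (Ideal.Quotient.eq_zero_iff_mem.mp hx)
  refine Ideal.Quotient.eq_zero_iff_mem.mpr ((mem_symbolicPower_iff P).mpr ⟨s * a, ?_, ?_⟩)
  · exact Ideal.IsPrime.mul_notMem ‹_› hs ha
  · simpa [mul_assoc] using hsx

theorem iInf_symbolicPower_eq_bot [IsDomain R] [IsNoetherianRing R] :
    ⨅ n, symbolicPower P n = ⊥ := by
  refine eq_bot_iff.mpr fun x hx ↦ ?_
  have hinj : Function.Injective (algebraMap R (Localization.AtPrime P)) :=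
    IsLocalization.injective _ P.primeCompl_le_nonZeroDivisors
  have hPne : P.map (algebraMap R (Localization.AtPrime P)) ≠ ⊤ := by
    rw [Localization.AtPrime.map_eq_maximalIdeal]
    exact Ideal.IsPrime.ne_top'
  have hx' : algebraMap R (Localization.AtPrime P) x ∈
      ⨅ n, P.map (algebraMap R (Localization.AtPrime P)) ^ n :=
    Ideal.mem_iInf.mpr fun n ↦ Ideal.map_pow (algebraMap R (Localization.AtPrime P)) P n ▸
      Ideal.mem_iInf.mp hx n
  rw [Ideal.iInf_pow_eq_bot_of_isLocalRing _ hPne] at hx'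
  exact (map_eq_zero_iff _ hinj).mp hx'

theorem symbolicPower_comap_le_comap {A : Type*} [CommRing A] (f : R →+* A) (Q : Ideal A)
    [Q.IsPrime] (n : ℕ) : symbolicPower (Q.comap f) n ≤ (symbolicPower Q n).comap f := by
  intro x hx
  obtain ⟨s, hs, hsx⟩ := (mem_symbolicPower_iff _).mp hx
  refine (mem_symbolicPower_iff Q).mpr ⟨f s, hs, ?_⟩
  rw [← map_mul]
  exact Ideal.le_comap_pow f n hsx

theorem exists_notMem_forall_mul_mem_pow [IsNoetherianRing R] (n : ℕ) :
    ∃ u ∉ P, ∀ x ∈ symbolicPower P n, u * x ∈ P ^ n := by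
  obtain ⟨s, hs⟩ := IsNoetherian.noetherian (symbolicPower P n)
  have hmul (x : symbolicPower P n) : ∃ c ∉ P, c * (x : R) ∈ P ^ n :=
    (mem_symbolicPower_iff P).mp x.2
  have hsub (x : s) : (x : R) ∈ symbolicPower P n := hs ▸ Submodule.subset_span x.2
  choose c hcP hc using hmul
  refine ⟨∏ x : s, c ⟨x, hsub x⟩, fun h ↦ ?_, ?_⟩
  · obtain ⟨x, -, hx⟩ := Ideal.IsPrime.prod_mem_iff.mp h
    exact hcP _ hx
  · suffices symbolicPower P n ≤ (P ^ n).colon {∏ x : s, c ⟨x, hsub x⟩} from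
      fun x hx ↦ by simpa [mul_comm] using Submodule.mem_colon_singleton.mp (this hx)
    refine hs.symm.trans_le (Submodule.span_le.mpr ?_)
    refine fun x hx ↦ Submodule.mem_colon_singleton.mpr ?_
    rw [smul_eq_mul, mul_comm]
    exact Ideal.mem_of_dvd _ (mul_dvd_mul_right
      (Finset.dvd_prod_of_mem _ (Finset.mem_univ (⟨x, hx⟩ : s))) x) (hc _)

theorem exists_symbolicPower_le_maximalIdeal_pow [IsRegularLocalRing R] (l : ℕ) :
    ∃ n, symbolicPower P n ≤ maximalIdeal R ^ l := by
  let A := AdicCompletion (maximalIdeal R) R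
  have : Module.Flat R A := AdicCompletion.flat_of_isNoetherian _
  have : Module.FaithfullyFlat R A := Module.FaithfullyFlat.of_flat_of_isLocalHom
  have := isDomain_of_isRegularLocalRing A
  obtain ⟨⟨Q, hQ⟩, hQP⟩ :=
    PrimeSpectrum.comap_surjective_of_faithfullyFlat (A := R) (B := A) ⟨P, inferInstance⟩
  obtain rfl : Q.comap (algebraMap R A) = P := congrArg PrimeSpectrum.asIdeal hQP
  obtain ⟨n, hn⟩ := exists_le_maximalIdeal_pow_of_iInf_eq_bot (symbolicPower_antitone Q)
    iInf_symbolicPower_eq_bot l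
  refine ⟨n, (symbolicPower_comap_le_comap _ Q n).trans ?_⟩
  rw [← Ideal.comap_map_eq_self_of_faithfullyFlat (B := A) (maximalIdeal R ^ l), Ideal.map_pow,
    ← AdicCompletion.maximalIdeal_eq_map]
  exact Ideal.comap_mono hn

theorem exists_symbolicPower_le_pow [IsRegularLocalRing R]
    (hP : ∀ q : Ideal R, q.IsPrime → P < q → q = maximalIdeal R) (n : ℕ) :
    ∃ t, symbolicPower P t ≤ P ^ n := by
  obtain ⟨u, huP, hu⟩ := exists_notMem_forall_mul_mem_pow (P := P) n
  obtain ⟨c, hc⟩ := exists_maximalIdeal_pow_le_pow_sup_span_singleton hP huP n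
  obtain ⟨k, hk⟩ := (maximalIdeal R).exists_pow_inf_eq_pow_smul (symbolicPower P n)
  obtain ⟨t, ht⟩ := exists_symbolicPower_le_maximalIdeal_pow (P := P) (k + c)
  have hmul : maximalIdeal R ^ c * symbolicPower P n ≤ P ^ n := by
    refine (Ideal.mul_mono_left hc).trans ?_
    rw [Ideal.sup_mul]
    refine sup_le Ideal.mul_le_left ?_
    rw [Ideal.span_singleton_mul_le_iff]
    exact hu
  refine ⟨t ⊔ n, fun x hx ↦ hmul ?_⟩
  have hx' : x ∈ maximalIdeal R ^ (k + c) • ⊤ ⊓ symbolicPower P n := by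
    refine ⟨?_, symbolicPower_antitone P le_sup_right hx⟩
    simpa using ht (symbolicPower_antitone P le_sup_left hx)
  rw [hk _ (Nat.le_add_right k c), Nat.add_sub_cancel_left] at hx'
  exact Ideal.mul_mono_right inf_le_right hx'

end SymbolicPower

section DirectLimit

variable {R ι : Type*} [CommRing R] [Preorder ι] {G G' G'' : ι → Type*}
  [∀ i, AddCommGroup (G i)] [∀ i, Module R (G i)] [∀ i, AddCommGroup (G' i)]
  [∀ i, Module R (G' i)] [∀ i, AddCommGroup (G'' i)] [∀ i, Module R (G'' i)]
  {f : ∀ i j, i ≤ j → G i →ₗ[R] G j} {f' : ∀ i j, i ≤ j → G' i →ₗ[R] G' j}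
  {f'' : ∀ i j, i ≤ j → G'' i →ₗ[R] G'' j} {H H' H'' : Type*} [AddCommGroup H] [Module R H]
  [AddCommGroup H'] [Module R H'] [AddCommGroup H''] [Module R H'']

/-- The maps `φ i : G i → H` exhibit `H` as the direct limit of the modules `G i` along the
transition maps `f`. This is the elementwise form of the colimit property for a directed index
set, so that a module only known to be such a colimit need not be replaced by
`Module.DirectLimit`. -/
structure IsDirectLimit (f : ∀ i j, i ≤ j → G i →ₗ[R] G j) (φ : ∀ i, G i →ₗ[R] H) : Prop where
  map_transition : ∀ i j (h : i ≤ j) x, φ j (f i j h x) = φ i x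
  exists_eq : ∀ y, ∃ i x, φ i x = y
  exists_transition_eq_zero : ∀ i x, φ i x = 0 → ∃ j, ∃ h : i ≤ j, f i j h x = 0

namespace IsDirectLimit

variable {φ : ∀ i, G i →ₗ[R] H} {φ' : ∀ i, G' i →ₗ[R] H'} {φ'' : ∀ i, G'' i →ₗ[R] H''}

theorem exists_lift [Nonempty ι] [IsDirectedOrder ι] (h : IsDirectLimit f φ)
    (ψ : ∀ i, G i →ₗ[R] H') (hψ : ∀ i j hij x, ψ j (f i j hij x) = ψ i x) :
    ∃ F : H →ₗ[R] H', ∀ i x, F (φ i x) = ψ i x := by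
  classical
  let e : Module.DirectLimit G f →ₗ[R] H := Module.DirectLimit.lift R ι G f φ h.map_transition
  have he : Function.Bijective e := by
    refine ⟨(injective_iff_map_eq_zero e).mpr fun z hz ↦ ?_, fun y ↦ ?_⟩
    · obtain ⟨i, x, rfl⟩ := Module.DirectLimit.exists_of z
      obtain ⟨j, hij, hx⟩ := h.exists_transition_eq_zero i x (by simpa [e] using hz)
      rw [← Module.DirectLimit.of_f (hij := hij), hx, map_zero]
    · obtain ⟨i, x, rfl⟩ := h.exists_eq y
      exact ⟨Module.DirectLimit.of R ι G f i x, Module.DirectLimit.lift_of ..⟩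
  let e' := LinearEquiv.ofBijective e he
  refine ⟨Module.DirectLimit.lift R ι G f ψ hψ ∘ₗ e'.symm, fun i x ↦ ?_⟩
  have hx : e'.symm (φ i x) = Module.DirectLimit.of R ι G f i x :=
    e'.symm_apply_eq.mpr (Module.DirectLimit.lift_of φ h.map_transition x).symm
  simp [hx]

theorem injective (h : IsDirectLimit f φ) (h' : IsDirectLimit f' φ')
    {α : ∀ i, G i →ₗ[R] G' i} (hα : ∀ i j hij x, α j (f i j hij x) = f' i j hij (α i x))
    {a : H →ₗ[R] H'} (ha : ∀ i x, a (φ i x) = φ' i (α i x))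
    (hinj : ∀ i, Function.Injective (α i)) : Function.Injective a := by
  refine (injective_iff_map_eq_zero a).mpr fun y hy ↦ ?_
  obtain ⟨i, x, rfl⟩ := h.exists_eq y
  obtain ⟨j, hij, hx⟩ := h'.exists_transition_eq_zero i (α i x) (by rw [← ha, hy])
  rw [← hα] at hx
  rw [← h.map_transition i j hij, (map_eq_zero_iff (α j) (hinj j)).mp hx, map_zero]

theorem surjective (h' : IsDirectLimit f' φ') {α : ∀ i, G i →ₗ[R] G' i} {a : H →ₗ[R] H'}
    (ha : ∀ i x, a (φ i x) = φ' i (α i x)) (hsurj : ∀ i, Function.Surjective (α i)) :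
    Function.Surjective a := by
  intro y
  obtain ⟨i, x, rfl⟩ := h'.exists_eq y
  obtain ⟨x, rfl⟩ := hsurj i x
  exact ⟨φ i x, ha i x⟩

theorem exact (h : IsDirectLimit f φ) (h' : IsDirectLimit f' φ') (h'' : IsDirectLimit f'' φ'')
    {α : ∀ i, G i →ₗ[R] G' i} {β : ∀ i, G' i →ₗ[R] G'' i}
    (hβ : ∀ i j hij x, β j (f' i j hij x) = f'' i j hij (β i x))
    {a : H →ₗ[R] H'} (ha : ∀ i x, a (φ i x) = φ' i (α i x))
    {b : H' →ₗ[R] H''} (hb : ∀ i x, b (φ' i x) = φ'' i (β i x))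
    (hexact : ∀ i, Function.Exact (α i) (β i)) : Function.Exact a b := by
  refine fun y ↦ ⟨fun hy ↦ ?_, ?_⟩
  · obtain ⟨i, x, rfl⟩ := h'.exists_eq y
    obtain ⟨j, hij, hx⟩ := h''.exists_transition_eq_zero i (β i x) (by rw [← hb, hy])
    rw [← hβ] at hx
    obtain ⟨z, hz⟩ := (hexact j _).mp hx
    exact ⟨φ j z, by rw [ha, hz, h'.map_transition]⟩
  · rintro ⟨z, rfl⟩
    obtain ⟨i, x, rfl⟩ := h.exists_eq z
    rw [ha, hb, (hexact i).apply_apply_eq_zero, map_zero]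

end IsDirectLimit

/-- The map `x ↦ x / g ^ n` from a module to its localization at the powers of `g`. -/
noncomputable def divPow (g : R) (n : ℕ) : H →ₗ[R] LocalizedModule (Submonoid.powers g) H :=
  LocalizedModule.divBy (Submonoid.pow g n) ∘ₗ LocalizedModule.mkLinearMap (Submonoid.powers g) H

theorem divPow_apply (g : R) (n : ℕ) (x : H) :
    divPow g n x = LocalizedModule.mk x (Submonoid.pow g n) := by
  rw [divPow, LinearMap.comp_apply, LocalizedModule.mkLinearMap_apply,
    LocalizedModule.divBy_apply, LocalizedModule.liftOn_mk, one_mul]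

theorem pow_smul_divPow_add (g : R) (m n : ℕ) (x : H) :
    g ^ m • divPow g (m + n) x = divPow g n x := by
  rw [← map_smul, divPow_apply, divPow_apply, LocalizedModule.mk_eq]
  exact ⟨1, by simp [Submonoid.smul_def, smul_smul, pow_add, mul_comm]⟩

theorem pow_smul_divPow (g : R) (n : ℕ) (x : H) :
    g ^ n • divPow g n x = LocalizedModule.mkLinearMap (Submonoid.powers g) H x := by
  rw [← map_smul, divPow_apply, LocalizedModule.mkLinearMap_apply]
  exact LocalizedModule.mk_cancel (Submonoid.pow g n) x

theorem divPow_eq_zero_iff {g : R} {n : ℕ} {x : H} :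
    divPow g n x = 0 ↔ ∃ m : ℕ, g ^ m • x = 0 := by
  rw [divPow_apply, IsLocalizedModule.mk_eq_mk', IsLocalizedModule.mk'_eq_zero']
  exact ⟨fun ⟨⟨_, m, rfl⟩, hm⟩ ↦ ⟨m, hm⟩, fun ⟨m, hm⟩ ↦ ⟨Submonoid.pow g m, hm⟩⟩

theorem IsDirectLimit.localizedModule {G : ℕ → Type*} [∀ i, AddCommGroup (G i)]
    [∀ i, Module R (G i)] {f : ∀ i j, i ≤ j → G i →ₗ[R] G j} [DirectedSystem G (f · · ·)]
    {φ : ∀ i, G i →ₗ[R] H} (h : IsDirectLimit f φ) (g : R) :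
    IsDirectLimit (fun i j hij ↦ g ^ (j - i) • f i j hij) (fun i ↦ divPow g i ∘ₗ φ i) where
  map_transition i j hij x := by
    obtain ⟨k, rfl⟩ := Nat.exists_eq_add_of_le' hij
    simp [pow_smul_divPow_add, h.map_transition]
  exists_eq y := by
    induction y using LocalizedModule.induction_on with | h y s
    obtain ⟨_, k, rfl⟩ := s
    obtain ⟨i, x, rfl⟩ := h.exists_eq y
    refine ⟨i + k, g ^ i • f i (i + k) (Nat.le_add_right i k) x, ?_⟩
    rw [LinearMap.comp_apply, map_smul, h.map_transition, map_smul, pow_smul_divPow_add,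
      divPow_apply]
    rfl
  exists_transition_eq_zero i x hx := by
    obtain ⟨k, hk⟩ := divPow_eq_zero_iff.mp hx
    obtain ⟨j, hij, hj⟩ := h.exists_transition_eq_zero i (g ^ k • x) (by rwa [map_smul])
    refine ⟨j + k, hij.trans (Nat.le_add_right j k), ?_⟩
    have hsub : j + k - i = (j - i) + k := by omega
    rw [LinearMap.smul_apply, hsub, pow_add, mul_smul, ← map_smul,
      ← DirectedSystem.map_map' f hij (Nat.le_add_right j k), hj, map_zero, smul_zero]

/-- Taking the limit over `i` of `0 → G i → G i → G'' i → 0`, with first map multiplication by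
`g ^ i`, turns the middle terms into a direct system with limit the localization of `H` at `g`. -/
theorem IsDirectLimit.exists_exact_mkLinearMap {G G'' : ℕ → Type*} [∀ i, AddCommGroup (G i)]
    [∀ i, Module R (G i)] [∀ i, AddCommGroup (G'' i)] [∀ i, Module R (G'' i)]
    {f : ∀ i j, i ≤ j → G i →ₗ[R] G j} {f'' : ∀ i j, i ≤ j → G'' i →ₗ[R] G'' j}
    {φ : ∀ i, G i →ₗ[R] H} {φ'' : ∀ i, G'' i →ₗ[R] H''} [DirectedSystem G (f · · ·)]
    (h : IsDirectLimit f φ) (h'' : IsDirectLimit f'' φ'') (g : R)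
    {β : ∀ i, G i →ₗ[R] G'' i}
    (hβ : ∀ i j hij x, β j (g ^ (j - i) • f i j hij x) = f'' i j hij (β i x))
    (hinj : ∀ i, Function.Injective (LinearMap.lsmul R (G i) (g ^ i)))
    (hsurj : ∀ i, Function.Surjective (β i))
    (hexact : ∀ i, Function.Exact (LinearMap.lsmul R (G i) (g ^ i)) (β i)) :
    Function.Injective (LocalizedModule.mkLinearMap (Submonoid.powers g) H) ∧
      ∃ π : LocalizedModule (Submonoid.powers g) H →ₗ[R] H'', Function.Surjective π ∧
        Function.Exact (LocalizedModule.mkLinearMap (Submonoid.powers g) H) π := by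
  have h' := h.localizedModule g
  obtain ⟨π, hπ⟩ := h'.exists_lift (fun i ↦ φ'' i ∘ₗ β i) fun i j hij x ↦ by
    rw [LinearMap.comp_apply, LinearMap.smul_apply, hβ, h''.map_transition, LinearMap.comp_apply]
  have hmk : ∀ i x, LocalizedModule.mkLinearMap (Submonoid.powers g) H (φ i x) =
      (divPow g i ∘ₗ φ i) (LinearMap.lsmul R (G i) (g ^ i) x) := fun i x ↦ by
    rw [LinearMap.lsmul_apply, map_smul, LinearMap.comp_apply, pow_smul_divPow]
  have hα : ∀ i j hij x, LinearMap.lsmul R (G j) (g ^ j) (f i j hij x) =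
      (g ^ (j - i) • f i j hij) (LinearMap.lsmul R (G i) (g ^ i) x) := fun i j hij x ↦ by
    simp only [LinearMap.lsmul_apply, LinearMap.smul_apply, map_smul, smul_smul, ← pow_add,
      Nat.add_sub_of_le hij]
  exact ⟨h.injective h' hα hmk hinj, π, h''.surjective hπ hsurj,
    h.exact h' h'' hβ hmk hπ hexact⟩

end DirectLimit

section ExtComparison

universe v u w

variable {R : Type*} [CommRing R] {C : Type u} [Category.{v} C] [Abelian C] [Linear R C]
  {X X' : C}

variable (R) in
/-- The submodule of `n`-cocycles of the complex `Hom(P, Y)`, for a projective resolution `P`. -/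
def extCocycles (P : ProjectiveResolution X) (Y : C) (n : ℕ) :
    Submodule R (P.complex.X n ⟶ Y) :=
  LinearMap.ker (Linear.leftComp R Y (P.complex.d (n + 1) n))

theorem mem_extCocycles_iff {P : ProjectiveResolution X} {Y : C} {n : ℕ}
    {f : P.complex.X n ⟶ Y} : f ∈ extCocycles R P Y n ↔ P.complex.d (n + 1) n ≫ f = 0 :=
  Iff.rfl

section AbelianExt

variable [HasExt.{w} C]

variable (R) in
/-- The class in `Abelian.Ext X Y n` of a cocycle of `Hom(P, Y)`. -/
noncomputable def extCocyclesToExt (P : ProjectiveResolution X) (Y : C) (n : ℕ) :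
    extCocycles R P Y n →ₗ[R] Abelian.Ext X Y n where
  toFun f := P.extMk f.1 (n + 1) rfl (mem_extCocycles_iff.mp f.2)
  map_add' f g := (P.add_extMk f.1 g.1 (n + 1) rfl f.2 g.2).symm
  map_smul' r f := by
    simp only [RingHom.id_apply, Abelian.Ext.smul_eq_comp_mk₀, P.extMk_comp_mk₀,
      SetLike.val_smul, Linear.comp_smul, Category.comp_id]

theorem extCocyclesToExt_surjective (P : ProjectiveResolution X) (Y : C) (n : ℕ) :
    Function.Surjective (extCocyclesToExt R P Y n) := fun x ↦
  let ⟨f, hf, h⟩ := P.extMk_surjective x (n + 1) rfl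
  ⟨⟨f, hf⟩, h⟩

theorem extMk_zero_eq_zero_iff (P : ProjectiveResolution X) {Y : C} (f : P.complex.X 0 ⟶ Y)
    (hf : P.complex.d 1 0 ≫ f = 0) : P.extMk f 1 rfl hf = 0 ↔ f = 0 := by
  refine ⟨fun h ↦ ?_, by rintro rfl; exact P.extMk_zero ..⟩
  rw [← P.extEquivCohomologyClass.apply_eq_iff_eq, P.extEquivCohomologyClass_extMk,
    P.extEquivCohomologyClass_zero, CochainComplex.HomComplex.CohomologyClass.mk_eq_zero_iff,
    CochainComplex.HomComplex.Cocycle.toSingleMk_mem_coboundaries_iff _ _ _ _ _ 1 (by simp)] at h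
  obtain ⟨y, hy⟩ := h
  have hX : Limits.IsZero (P.cochainComplex.X 1) :=
    P.cochainComplex.isZero_of_isStrictlyLE 0 1
  rw [← cancel_epi (P.cochainComplexXIso (-(0 : ℕ)) 0 rfl).hom, ← hy,
    hX.eq_of_tgt (P.cochainComplex.d _ 1) 0, Limits.zero_comp, Limits.comp_zero]

theorem extCocyclesToExt_eq_zero_iff (P : ProjectiveResolution X) (Y : C) (n : ℕ)
    (z : extCocycles R P Y n) : extCocyclesToExt R P Y n z = 0 ↔
      ∃ y : P.complex.X ((ComplexShape.up ℕ).prev n) ⟶ Y, P.complex.d n _ ≫ y = z.1 := by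
  cases n with
  | zero =>
    rw [P.complex.shape 0 _ (by simp)]
    refine (extMk_zero_eq_zero_iff P z.1 z.2).trans ?_
    simp only [Limits.zero_comp, exists_const, eq_comm]
  | succ p => exact P.extMk_eq_zero_iff z.1 _ rfl z.2 _ (by simp)

end AbelianExt

section ModuleComplex

variable {A : Type*} [Ring A] {ι : Type*} {c : ComplexShape ι}

theorem iCycles_injective (K : HomologicalComplex (ModuleCat A) c) (i : ι) :
    Function.Injective (K.iCycles i) :=
  (ModuleCat.mono_iff_injective _).mp inferInstance

theorem homologyπ_eq_zero_iff (K : HomologicalComplex (ModuleCat A) c) (i : ι) (x : K.cycles i) :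
    K.homologyπ i x = 0 ↔ ∃ y, K.d (c.prev i) i y = K.iCycles i x := by
  have hexact : (ShortComplex.mk (K.toCycles (c.prev i) i) (K.homologyπ i)
      (K.toCycles_comp_homologyπ _ _)).Exact :=
    ShortComplex.exact_of_g_is_cokernel _ (K.homologyIsCokernel _ i rfl)
  rw [ShortComplex.ShortExact.moduleCat_exact_iff_function_exact] at hexact
  refine (hexact x).trans (exists_congr fun y ↦ ?_)
  rw [← (iCycles_injective K i).eq_iff, ← ModuleCat.comp_apply, K.toCycles_i]

/-- The elements of the kernel of the differential, viewed as elements of the abstract object of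
cycles, for a complex of modules. -/
noncomputable def kerToCycles (K : HomologicalComplex (ModuleCat A) c) (i j : ι)
    (hj : c.next i = j) : LinearMap.ker (K.d i j).hom →ₗ[A] K.cycles i :=
  (K.liftCycles (A := ModuleCat.of A (LinearMap.ker (K.d i j).hom))
    (ModuleCat.ofHom (LinearMap.ker (K.d i j).hom).subtype) j hj (by ext z; exact z.2)).hom

theorem iCycles_kerToCycles (K : HomologicalComplex (ModuleCat A) c) {i j : ι}
    (hj : c.next i = j) (z : LinearMap.ker (K.d i j).hom) :
    K.iCycles i (kerToCycles K i j hj z) = z.1 :=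
  ConcreteCategory.congr_hom (K.liftCycles_i (A := ModuleCat.of A (LinearMap.ker (K.d i j).hom))
    (ModuleCat.ofHom (LinearMap.ker (K.d i j).hom).subtype) j hj (by ext z; exact z.2)) z

theorem kerToCycles_surjective (K : HomologicalComplex (ModuleCat A) c) {i j : ι}
    (hj : c.next i = j) : Function.Surjective (kerToCycles K i j hj) := fun x ↦
  ⟨⟨K.iCycles i x, ConcreteCategory.congr_hom (K.iCycles_d i j) x⟩,
    iCycles_injective K i (iCycles_kerToCycles K hj _)⟩

/-- The homology class of an element of the kernel of the differential, for a complex of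
modules. -/
noncomputable def kerToHomology (K : HomologicalComplex (ModuleCat A) c) (i j : ι)
    (hj : c.next i = j) : LinearMap.ker (K.d i j).hom →ₗ[A] K.homology i :=
  (K.homologyπ i).hom ∘ₗ kerToCycles K i j hj

theorem kerToHomology_surjective (K : HomologicalComplex (ModuleCat A) c) {i j : ι}
    (hj : c.next i = j) : Function.Surjective (kerToHomology K i j hj) :=
  ((ModuleCat.epi_iff_surjective (K.homologyπ i)).mp inferInstance).comp
    (kerToCycles_surjective K hj)

theorem kerToHomology_eq_zero_iff (K : HomologicalComplex (ModuleCat A) c) {i j : ι}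
    (hj : c.next i = j) (z : LinearMap.ker (K.d i j).hom) :
    kerToHomology K i j hj z = 0 ↔ ∃ y, K.d (c.prev i) i y = z.1 := by
  rw [← iCycles_kerToCycles K hj z]
  exact homologyπ_eq_zero_iff K i _

theorem homologyMap_kerToHomology {K L : HomologicalComplex (ModuleCat A) c} (φ : K ⟶ L)
    {i j : ι} (hj : c.next i = j) {z : LinearMap.ker (K.d i j).hom}
    {z' : LinearMap.ker (L.d i j).hom} (h : φ.f i z.1 = z'.1) :
    HomologicalComplex.homologyMap φ i (kerToHomology K i j hj z) = kerToHomology L i j hj z' := by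
  have hz' : HomologicalComplex.cyclesMap φ i (kerToCycles K i j hj z) = kerToCycles L i j hj z' :=
    iCycles_injective L i <| by
      rw [← ModuleCat.comp_apply, HomologicalComplex.cyclesMap_i, ModuleCat.comp_apply,
        iCycles_kerToCycles, iCycles_kerToCycles, h]
  exact (ConcreteCategory.congr_hom (HomologicalComplex.homologyπ_naturality φ i) _).trans
    (congrArg (L.homologyπ i) hz')

end ModuleComplex

theorem homologyUnop_hom_naturality {V : Type*} [Category V] [Preadditive V]
    [CategoryWithHomology V] {ι : Type*} {c : ComplexShape ι} {K L : HomologicalComplex Vᵒᵖ c}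
    (φ : K ⟶ L) (i : ι) :
    HomologicalComplex.homologyMap ((HomologicalComplex.unopFunctor V c).map φ.op) i ≫
        (K.homologyUnop i).hom =
      (L.homologyUnop i).hom ≫ (HomologicalComplex.homologyMap φ i).unop :=
  Quiver.Hom.op_inj (HomologicalComplex.homologyOp_hom_naturality
    ((HomologicalComplex.unopFunctor V c).map φ.op) i).symm


variable [EnoughProjectives C]

variable (R) in
/-- The class of a cocycle of `Hom(P, Y)` in the module `Ext R C n` obtained by deriving
`Hom(-, Y)`. -/
noncomputable def extCocyclesToDerivedExt (P : ProjectiveResolution X) (Y : C) (n : ℕ) :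
    extCocycles R P Y n →ₗ[R] ((Ext R C n).obj (op X)).obj Y :=
  (P.isoExt n Y).toLinearEquiv.symm.toLinearMap ∘ₗ
    kerToHomology (P.complex.linearYonedaObj R Y) n (n + 1) (by simp)

theorem extCocyclesToDerivedExt_surjective (P : ProjectiveResolution X) (Y : C) (n : ℕ) :
    Function.Surjective (extCocyclesToDerivedExt R P Y n) :=
  (P.isoExt n Y).toLinearEquiv.symm.surjective.comp
    (kerToHomology_surjective _ _)

theorem extCocyclesToDerivedExt_eq_zero_iff (P : ProjectiveResolution X) (Y : C) (n : ℕ)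
    (z : extCocycles R P Y n) : extCocyclesToDerivedExt R P Y n z = 0 ↔
      ∃ y : P.complex.X ((ComplexShape.up ℕ).prev n) ⟶ Y, P.complex.d n _ ≫ y = z.1 :=
  (P.isoExt n Y).toLinearEquiv.symm.map_eq_zero_iff.trans
    (kerToHomology_eq_zero_iff (P.complex.linearYonedaObj R Y) (by simp) z)

theorem map_extCocyclesToDerivedExt {P : ProjectiveResolution X} {P' : ProjectiveResolution X'}
    {f : X' ⟶ X} (φ : ProjectiveResolution.Hom P' P f) {Y : C} {n : ℕ}
    {z : extCocycles R P Y n} {z' : extCocycles R P' Y n} (hz : φ.hom.f n ≫ z.1 = z'.1) :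
    (((Ext R C n).map f.op).app Y).hom (extCocyclesToDerivedExt R P Y n z) =
      extCocyclesToDerivedExt R P' Y n z' := by
  let F := ((linearYoneda R C).obj Y).rightOp
  let ψ := (F.mapHomologicalComplex (ComplexShape.down ℕ)).map φ.hom
  have hψ : (P.isoExt n Y).inv ≫ ((Ext R C n).map f.op).app Y =
      HomologicalComplex.homologyMap ((HomologicalComplex.unopFunctor _ _).map ψ.op) n ≫
        (P'.isoExt n Y).inv := by
    have h := congrArg Quiver.Hom.unop <|
      ProjectiveResolution.isoLeftDerivedObj_hom_naturality f P' P φ.hom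
        (by simpa using φ.hom_f_zero_comp_π_f_zero) F n
    have h' := eq_whisker (homologyUnop_hom_naturality ψ n) (P'.isoLeftDerivedObj F n).hom.unop
    exact (Category.assoc _ _ _).trans <| (whisker_eq _ h).trans <|
      (Category.assoc _ _ _).symm.trans <| h'.symm.trans (Category.assoc _ _ _)
  exact (ConcreteCategory.congr_hom hψ _).trans
    (congrArg (P'.isoExt n Y).inv (homologyMap_kerToHomology _ _ hz))

variable (R) in
/-- The comparison between `Abelian.Ext`, defined through the derived category, and the module
`Ext R C n` obtained by deriving `Hom(-, Y)`. -/
noncomputable def extEquivDerivedExt [HasExt.{w} C] (X Y : C) (n : ℕ) :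
    Abelian.Ext X Y n ≃ₗ[R] ((Ext R C n).obj (op X)).obj Y :=
  ((extCocyclesToExt R (projectiveResolution X) Y n).quotKerEquivOfSurjective
      (extCocyclesToExt_surjective _ Y n)).symm ≪≫ₗ
    Submodule.quotEquivOfEq _ _ (by
      ext z
      simp only [LinearMap.mem_ker, extCocyclesToExt_eq_zero_iff,
        extCocyclesToDerivedExt_eq_zero_iff]) ≪≫ₗ
    (extCocyclesToDerivedExt R (projectiveResolution X) Y n).quotKerEquivOfSurjective
      (extCocyclesToDerivedExt_surjective _ Y n)

theorem extEquivDerivedExt_extCocyclesToExt [HasExt.{w} C] (X Y : C) (n : ℕ)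
    (z : extCocycles R (projectiveResolution X) Y n) :
    extEquivDerivedExt R X Y n (extCocyclesToExt R _ Y n z) =
      extCocyclesToDerivedExt R _ Y n z := by
  have h : ((extCocyclesToExt R (projectiveResolution X) Y n).quotKerEquivOfSurjective
      (extCocyclesToExt_surjective _ Y n)).symm (extCocyclesToExt R _ Y n z) =
        Submodule.Quotient.mk z :=
    (LinearEquiv.symm_apply_eq _).mpr rfl
  simp only [extEquivDerivedExt, LinearEquiv.trans_apply, h]
  rfl

theorem extEquivDerivedExt_mk₀_comp [HasExt.{w} C] (f : X' ⟶ X) {Y : C} {n : ℕ}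
    (x : Abelian.Ext X Y n) :
    extEquivDerivedExt R X' Y n ((Abelian.Ext.mk₀ f).comp x (zero_add n)) =
      (((Ext R C n).map f.op).app Y).hom (extEquivDerivedExt R X Y n x) := by
  obtain ⟨z, rfl⟩ := extCocyclesToExt_surjective (R := R) (projectiveResolution X) Y n x
  let φ : ProjectiveResolution.Hom (projectiveResolution X') (projectiveResolution X) f :=
    ⟨ProjectiveResolution.lift f _ _, by
      rw [ChainComplex.single₀_map_f_zero, ProjectiveResolution.lift_commutes_zero]
      rfl⟩
  let z' : extCocycles R (projectiveResolution X') Y n := ⟨φ.hom.f n ≫ z.1, by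
    rw [mem_extCocycles_iff, ← φ.hom.comm_assoc, mem_extCocycles_iff.mp z.2, Limits.comp_zero]⟩
  have hz' : (Abelian.Ext.mk₀ f).comp (extCocyclesToExt R _ Y n z) (zero_add n) =
      extCocyclesToExt R _ Y n z' :=
    ProjectiveResolution.mk₀_comp_extMk z.1 (n + 1) rfl z.2 φ
  rw [hz', extEquivDerivedExt_extCocyclesToExt, extEquivDerivedExt_extCocyclesToExt,
    map_extCocyclesToDerivedExt φ (z' := z') rfl]

end ExtComparison

section LocalCohomology

universe u

theorem IsDirectLimit.congr {R ι : Type*} [CommRing R] [Preorder ι] {G G' : ι → Type*}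
    [∀ i, AddCommGroup (G i)] [∀ i, Module R (G i)] [∀ i, AddCommGroup (G' i)]
    [∀ i, Module R (G' i)] {f : ∀ i j, i ≤ j → G i →ₗ[R] G j} {f' : ∀ i j, i ≤ j → G' i →ₗ[R] G' j}
    {H H' : Type*} [AddCommGroup H] [Module R H] [AddCommGroup H'] [Module R H']
    {φ : ∀ i, G i →ₗ[R] H} (h : IsDirectLimit f φ) (e : ∀ i, G' i ≃ₗ[R] G i)
    (he : ∀ i j hij x, e j (f' i j hij x) = f i j hij (e i x)) (e' : H ≃ₗ[R] H') :
    IsDirectLimit f' (fun i ↦ e'.toLinearMap ∘ₗ φ i ∘ₗ (e i).toLinearMap) where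
  map_transition i j hij x := congrArg e' (by simpa [he] using h.map_transition i j hij (e i x))
  exists_eq y := by
    obtain ⟨i, x, hx⟩ := h.exists_eq (e'.symm y)
    exact ⟨i, (e i).symm x, by simp [hx]⟩
  exists_transition_eq_zero i x hx := by
    obtain ⟨j, hij, hj⟩ := h.exists_transition_eq_zero i (e i x) (by simpa using hx)
    exact ⟨j, hij, (e j).map_eq_zero_iff.mp (by rw [he, hj])⟩

theorem isDirectLimit_of_isColimit {R : Type u} [CommRing R] {ι : Type} [Preorder ι] [Nonempty ι]
    [IsDirectedOrder ι] {F : ι ⥤ ModuleCat.{u} R} {c : Limits.Cocone F} (hc : Limits.IsColimit c) :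
    IsDirectLimit (R := R) (G := fun i ↦ F.obj i) (H := c.pt)
      (fun _ _ hij ↦ (F.map (homOfLE hij)).hom)
      (fun i ↦ ModuleCat.Hom.hom (B := c.pt) (c.ι.app i)) := by
  have := Limits.preservesFilteredColimitsOfSize_shrink.{0, u, 0, u} (forget (ModuleCat.{u} R))
  refine ⟨fun i j hij ↦ ConcreteCategory.congr_hom (c.w (homOfLE hij)),
    Limits.Concrete.isColimit_exists_rep F hc, fun i x hx ↦ ?_⟩
  obtain ⟨j, hij, hij', hj⟩ :=
    Limits.Concrete.isColimit_exists_of_rep_eq F hc x (0 : F.obj i) (hx.trans (map_zero _).symm)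
  exact ⟨j, leOfHom hij, hj.trans (map_zero _)⟩

variable {S : Type u} [CommRing S]

/-- The map `Ext^i(S/J, Y) → Ext^i(S/I, Y)` induced by the projection `S/I → S/J` for `I ≤ J`. -/
noncomputable def extFactor {I J : Ideal S} (h : I ≤ J) (Y : ModuleCat.{u} S) (i : ℕ) :
    Abelian.Ext (ModuleCat.of S (S ⧸ J)) Y i →ₗ[S] Abelian.Ext (ModuleCat.of S (S ⧸ I)) Y i :=
  Abelian.Ext.precompOfLinear
    (Abelian.Ext.mk₀ (ModuleCat.ofHom (Submodule.mapQ I J LinearMap.id h))) S Y (zero_add i)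

variable {J : ℕ → Ideal S} (hJ : Antitone J) (Y : ModuleCat.{u} S) (i : ℕ)

theorem directedSystem_extFactor :
    DirectedSystem (fun t ↦ Abelian.Ext (ModuleCat.of S (S ⧸ J t)) Y i)
      (fun _ _ h ↦ extFactor (hJ h) Y i) where
  map_self t x := by
    have h : ModuleCat.ofHom (Submodule.mapQ (J t) (J t) LinearMap.id le_rfl) = 𝟙 _ := by
      rw [Submodule.mapQ_id]; rfl
    exact (congrArg (fun f ↦ (Abelian.Ext.mk₀ f).comp x (zero_add i)) h).trans
      (Abelian.Ext.mk₀_id_comp x)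
  map_map k t s hst htk x := by
    refine (Abelian.Ext.mk₀_comp_mk₀_assoc _ _ x).trans ?_
    rw [← ModuleCat.ofHom_comp, ← Submodule.mapQ_comp]
    rfl

/-- A decreasing sequence of ideals as a diagram indexed by `ℕᵒᵖ`, the form in which Mathlib's
`localCohomology.ofDiagram` takes it. -/
def antitoneDiagram : ℕᵒᵖ ⥤ Ideal S where
  obj t := J t.unop
  map w := homOfLE (hJ (leOfHom w.unop))

theorem nonempty_ofDiagram_antitoneDiagram_iso_localCohomology [IsNoetherianRing S] {I : Ideal S}
    (hrad : ∀ t, I ≤ (J t).radical) (hcof : ∀ k, ∃ t, J t ≤ I ^ k) :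
    Nonempty (localCohomology.ofDiagram (antitoneDiagram hJ) i ≅ localCohomology I i) := by
  let J' : ℕᵒᵖ ⥤ localCohomology.SelfLERadical I :=
    ObjectProperty.lift _ (antitoneDiagram hJ) fun t ↦ hrad t.unop
  have : J'.Initial := by
    refine Functor.initial_of_exists_of_isCofiltered _ (fun K ↦ ?_) fun s s' ↦ ?_
    · obtain ⟨k, hk⟩ :=
        Ideal.exists_pow_le_of_le_radical_of_fg K.2 (IsNoetherian.noetherian I)
      obtain ⟨t, ht⟩ := hcof k
      exact ⟨op t, ⟨⟨homOfLE (ht.trans hk)⟩⟩⟩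
    · exact ⟨_, 𝟙 _, rfl⟩
  exact ⟨localCohomology.isoOfFinal J' (localCohomology.selfLERadicalDiagram I) i ≪≫
    localCohomology.isoSelfLERadical I i⟩

theorem exists_isDirectLimit_ofDiagram_antitoneDiagram :
    ∃ φ : ∀ t, Abelian.Ext (ModuleCat.of S (S ⧸ J t)) Y i →ₗ[S]
        (localCohomology.ofDiagram (antitoneDiagram hJ) i).obj Y,
      IsDirectLimit (fun _ _ h ↦ extFactor (hJ h) Y i) φ := by
  let D := localCohomology.diagram (antitoneDiagram hJ) i
  let ev := (evaluation (ModuleCat.{u} S) (ModuleCat.{u} S)).obj Y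
  have : Limits.HasColimit D := localCohomology.hasColimitDiagram _ i
  have hc := (Functor.Final.isColimitWhiskerEquiv (opOp ℕ) _).symm
    (Limits.isColimitOfPreserves ev (Limits.colimit.isColimit D))
  exact ⟨_, (isDirectLimit_of_isColimit hc).congr (f' := fun _ _ h ↦ extFactor (hJ h) Y i)
    (fun t ↦ extEquivDerivedExt S (ModuleCat.of S (S ⧸ J t)) Y i)
    (fun _ _ _ x ↦ extEquivDerivedExt_mk₀_comp _ x) (LinearEquiv.refl S _)⟩

theorem exists_isDirectLimit_localCohomology [IsNoetherianRing S] {I : Ideal S}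
    (hrad : ∀ t, I ≤ (J t).radical) (hcof : ∀ k, ∃ t, J t ≤ I ^ k) :
    ∃ φ : ∀ t, Abelian.Ext (ModuleCat.of S (S ⧸ J t)) Y i →ₗ[S]
        (localCohomology I i).obj Y,
      IsDirectLimit (fun _ _ h ↦ extFactor (hJ h) Y i) φ := by
  obtain ⟨e⟩ := nonempty_ofDiagram_antitoneDiagram_iso_localCohomology hJ i hrad hcof
  obtain ⟨φ, hφ⟩ := exists_isDirectLimit_ofDiagram_antitoneDiagram hJ Y i
  exact ⟨_, hφ.congr (fun _ ↦ LinearEquiv.refl S _) (fun _ _ _ _ ↦ rfl)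
    (e.app Y).toLinearEquiv⟩

end LocalCohomology

section ExtVanishing

universe u

open IsLocalRing RingTheory.Sequence

variable {S : Type u} [CommRing S]

theorem exists_isWeaklyRegular_ofList_eq_maximalIdeal [IsRegularLocalRing S] {d : ℕ}
    (hd : ringKrullDim S = d) :
    ∃ l : List S, l.length = d ∧ Ideal.ofList l = maximalIdeal S ∧ IsWeaklyRegular S l := by
  obtain ⟨s, hcard, hs⟩ :=
    (IsNoetherian.noetherian (maximalIdeal S)).exists_span_finset_card_eq_spanFinrank
  have hl : Ideal.ofList s.toList = maximalIdeal S := by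
    simpa [Ideal.ofList] using hs
  refine ⟨s.toList, ?_, hl, isWeaklyRegular_of_ofList_eq_maximalIdeal hl (by simp [hcard])⟩
  rw [← IsRegularLocalRing.spanFinrank_maximalIdeal, ← hcard] at hd
  simpa using hd

variable [IsLocalRing S]

theorem support_quotient_subset_zeroLocus_maximalIdeal {J : Ideal S}
    (hJ : maximalIdeal S ≤ J.radical) :
    Module.support S (S ⧸ J) ⊆ PrimeSpectrum.zeroLocus (maximalIdeal S) := by
  intro p hp
  have hJp : J ≤ p.asIdeal := by
    simpa [Ideal.annihilator_quotient] using Module.annihilator_le_of_mem_support hp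
  exact hJ.trans (p.2.radical_le_iff.mpr hJp)

variable [IsNoetherianRing S] {l : List S} (hl : Ideal.ofList l = maximalIdeal S)
  (hreg : IsWeaklyRegular S l)

include hl hreg

theorem subsingleton_ext_of_support_subset_of_lt (M : ModuleCat.{u} S) [Module.Finite S M]
    (hM : Module.support S M ⊆ PrimeSpectrum.zeroLocus (maximalIdeal S)) {i : ℕ}
    (hi : i < l.length) : Subsingleton (Abelian.Ext M (ModuleCat.of S S) i) := by
  have hlt : maximalIdeal S • (⊤ : Submodule S S) < ⊤ := by
    simpa [lt_top_iff_ne_top] using (maximalIdeal.isMaximal S).ne_top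
  exact ModuleCat.subsingleton_ext_of_exists_isRegular (maximalIdeal S) M hM (ModuleCat.of S S)
    hlt l (fun r hr ↦ hl ▸ Ideal.subset_span hr) ⟨hreg, hl ▸ hlt.ne'⟩ i hi

theorem hasProjectiveDimensionLT_residueField :
    HasProjectiveDimensionLT (ModuleCat.of S (S ⧸ maximalIdeal S)) (l.length + 1) := by
  have hpd := ModuleCat.projectiveDimension_quotient_eq_add_length_of_isWeaklyRegular
    (ModuleCat.of S S) l hreg fun r hr ↦ hl ▸ Ideal.subset_span hr
  rw [ModuleCat.projectiveDimension_eq_zero_of_projective (ModuleCat.of S S), zero_add] at hpd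
  have hlt : (l.length : WithBot ℕ∞) < (l.length + 1 : ℕ) := mod_cast l.length.lt_succ_self
  have := projectiveDimension_lt_iff.mp (hpd.trans_lt hlt)
  have e : (S ⧸ Ideal.ofList l • (⊤ : Submodule S S)) ≃ₗ[S] S ⧸ maximalIdeal S :=
    Submodule.quotEquivOfEq _ _ (by simp [hl])
  exact hasProjectiveDimensionLT_of_iso e.toModuleIso _

theorem hasProjectiveDimensionLT_of_support_subset (M : Type u) [AddCommGroup M] [Module S M]
    [hM : Module.Finite S M]
    (hsupp : Module.support S M ⊆ PrimeSpectrum.zeroLocus (maximalIdeal S)) :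
    HasProjectiveDimensionLT (ModuleCat.of S M) (l.length + 1) := by
  revert hsupp
  induction hM using IsNoetherianRing.induction_on_isQuotientEquivQuotientPrime S with
  | subsingleton N =>
    intro
    have := (ModuleCat.isZero_of_subsingleton (ModuleCat.of S N)).hasProjectiveDimensionLT_zero
    exact hasProjectiveDimensionLT_of_ge _ 0 _ (Nat.zero_le _)
  | quotient N p f =>
    intro hsupp
    have hmem : p ∈ Module.support S N := by
      simp [LinearEquiv.support_eq f, Module.support_eq_zeroLocus, Ideal.annihilator_quotient]
    have hp : p.asIdeal = maximalIdeal S :=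
      le_antisymm (le_maximalIdeal p.2.ne_top) (hsupp hmem)
    rw [hp] at f
    have := hasProjectiveDimensionLT_residueField hl hreg
    exact hasProjectiveDimensionLT_of_iso f.symm.toModuleIso _
  | exact N₁ N₂ N₃ f g hf hg hfg ih₁ ih₃ =>
    intro hsupp
    let T := ModuleCat.shortComplexOfCompEqZero f g hfg.linearMap_comp_eq_zero
    have hT : T.ShortExact :=
      { exact := ModuleCat.shortComplex_exact _ hfg
        mono_f := (ModuleCat.mono_iff_injective _).mpr hf
        epi_g := (ModuleCat.epi_iff_surjective _).mpr hg }
    exact hT.hasProjectiveDimensionLT_X₂ _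
      (ih₁ ((Module.support_subset_of_injective f hf).trans hsupp))
      (ih₃ ((Module.support_subset_of_surjective g hg).trans hsupp))

end ExtVanishing

section Connecting

universe u

variable {S : Type u} [CommRing S]

/-- The sequence `S/Q → S/Q → S/(Q + (c))` whose first map is multiplication by `c`. It is short
exact when `c` is a nonzerodivisor on `S/Q`, and its long exact `Ext` sequence relates
multiplication by `c` on `Ext^i(S/Q, -)` to `Ext^{i+1}(S/(Q + (c)), -)`. -/
noncomputable def smulShortComplex (Q : Ideal S) (c : S) : ShortComplex (ModuleCat.{u} S) :=
  ShortComplex.mk (X₁ := ModuleCat.of S (S ⧸ Q)) (c • 𝟙 (ModuleCat.of S (S ⧸ Q)))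
    (ModuleCat.ofHom (Submodule.mapQ Q (Q ⊔ Ideal.span {c}) LinearMap.id le_sup_left)) (by
      ext
      exact Ideal.Quotient.eq_zero_iff_mem.mpr
        (Ideal.mem_sup_right (Ideal.mem_span_singleton'.mpr ⟨1, mul_comm _ _⟩)))

variable {Q : Ideal S} {c : S}

theorem smulShortComplex_shortExact (hc : IsSMulRegular (S ⧸ Q) c) :
    (smulShortComplex Q c).ShortExact where
  exact := by
    rw [ShortComplex.moduleCat_exact_iff]
    intro x hx
    obtain ⟨x, rfl⟩ := Ideal.Quotient.mk_surjective (I := Q) x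
    obtain ⟨y, hy, z, hz, rfl⟩ := Submodule.mem_sup.mp (Ideal.Quotient.eq_zero_iff_mem.mp hx)
    obtain ⟨w, rfl⟩ := Ideal.mem_span_singleton'.mp hz
    refine ⟨Ideal.Quotient.mk Q w, Ideal.Quotient.eq.mpr ?_⟩
    have hsub : c * w - (y + w * c) = -y := by ring
    exact hsub ▸ neg_mem hy
  mono_f := (ModuleCat.mono_iff_injective _).mpr hc
  epi_g := (ModuleCat.epi_iff_surjective _).mpr
    (Submodule.factor_surjective (p := Q) (p' := Q ⊔ Ideal.span {c}) le_sup_left)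

theorem mk₀_smul_id_comp {X Y : ModuleCat.{u} S} {i : ℕ} (c : S) (x : Abelian.Ext X Y i) :
    (Abelian.Ext.mk₀ (c • 𝟙 X)).comp x (zero_add i) = c • x := by
  rw [Abelian.Ext.mk₀_smul, Abelian.Ext.smul_comp, Abelian.Ext.mk₀_id_comp]

/-- The connecting map `Ext^i(S/Q, Y) → Ext^{i+1}(S/(Q + (c)), Y)` of `smulShortComplex Q c`. -/
noncomputable def extConnecting (hc : IsSMulRegular (S ⧸ Q) c) (Y : ModuleCat.{u} S) (i : ℕ) :
    Abelian.Ext (ModuleCat.of S (S ⧸ Q)) Y i →ₗ[S]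
      Abelian.Ext (ModuleCat.of S (S ⧸ (Q ⊔ Ideal.span {c}))) Y (i + 1) :=
  Abelian.Ext.precompOfLinear (smulShortComplex_shortExact hc).extClass S Y (add_comm 1 i)

variable (hc : IsSMulRegular (S ⧸ Q) c) (Y : ModuleCat.{u} S) (i : ℕ)

theorem exact_lsmul_extConnecting :
    Function.Exact (LinearMap.lsmul S (Abelian.Ext (ModuleCat.of S (S ⧸ Q)) Y i) c)
      (extConnecting hc Y i) := by
  refine fun x ↦ ⟨fun hx ↦ ?_, ?_⟩
  · obtain ⟨y, hy⟩ := Abelian.Ext.contravariant_sequence_exact₁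
      (smulShortComplex_shortExact hc) Y x (add_comm 1 i) hx
    exact ⟨y, (mk₀_smul_id_comp c y).symm.trans hy⟩
  · rintro ⟨y, rfl⟩
    rw [LinearMap.lsmul_apply, ← mk₀_smul_id_comp]
    exact (smulShortComplex_shortExact hc).extClass_comp_assoc y (h := add_comm 1 i)

include hc in
theorem injective_lsmul_ext
    [Subsingleton (Abelian.Ext (ModuleCat.of S (S ⧸ (Q ⊔ Ideal.span {c}))) Y i)] :
    Function.Injective (LinearMap.lsmul S (Abelian.Ext (ModuleCat.of S (S ⧸ Q)) Y i) c) := by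
  refine (injective_iff_map_eq_zero _).mpr fun x hx ↦ ?_
  obtain ⟨y, rfl⟩ := Abelian.Ext.contravariant_sequence_exact₂
    (smulShortComplex_shortExact hc) Y x ((mk₀_smul_id_comp c x).trans hx)
  rw [show y = 0 from Subsingleton.elim (α := Abelian.Ext (ModuleCat.of S
    (S ⧸ (Q ⊔ Ideal.span {c}))) Y i) _ _]
  exact Abelian.Ext.comp_zero ..

theorem surjective_extConnecting
    [Subsingleton (Abelian.Ext (ModuleCat.of S (S ⧸ Q)) Y (i + 1))] :
    Function.Surjective (extConnecting hc Y i) := fun x ↦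
  Abelian.Ext.contravariant_sequence_exact₃ (smulShortComplex_shortExact hc) Y x
    (Subsingleton.elim (α := Abelian.Ext (ModuleCat.of S (S ⧸ Q)) Y (i + 1)) _ _) (add_comm 1 i)

open IsLocalRing in
include hc in
theorem subsingleton_ext_of_subsingleton_ext_succ [IsLocalRing S] [IsNoetherianRing S]
    (hcm : c ∈ maximalIdeal S) [Module.Finite S Y]
    [Subsingleton (Abelian.Ext (ModuleCat.of S (S ⧸ (Q ⊔ Ideal.span {c}))) Y (i + 1))] :
    Subsingleton (Abelian.Ext (ModuleCat.of S (S ⧸ Q)) Y i) := by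
  have : Module.Finite S (Abelian.Ext (ModuleCat.of S (S ⧸ Q)) Y i) := ModuleCat.finite_ext ..
  refine (Submodule.subsingleton_iff S).mp (subsingleton_of_top_le_bot ?_)
  refine (Submodule.eq_bot_of_le_smul_of_le_jacobson_bot (maximalIdeal S) _ this.fg_top
    (fun x _ ↦ ?_) (maximalIdeal_le_jacobson _)).le
  obtain ⟨y, rfl⟩ := (exact_lsmul_extConnecting hc Y i x).mp (Subsingleton.elim _ _)
  exact Submodule.smul_mem_smul hcm trivial

/-- For `Q' ≤ Q` and `c' = d * c`, the morphism from `smulShortComplex Q' c'` to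
`smulShortComplex Q c` given by `d`, the projection and the projection. -/
noncomputable def smulShortComplexMap {Q' : Ideal S} {c' : S} (hQ : Q' ≤ Q) (d : S)
    (hd : c' = d * c) (h : Q' ⊔ Ideal.span {c'} ≤ Q ⊔ Ideal.span {c}) :
    smulShortComplex Q' c' ⟶ smulShortComplex Q c where
  τ₁ := d • ModuleCat.ofHom (Submodule.mapQ Q' Q LinearMap.id hQ)
  τ₂ := ModuleCat.ofHom (Submodule.mapQ Q' Q LinearMap.id hQ)
  τ₃ := ModuleCat.ofHom (Submodule.mapQ _ _ LinearMap.id h)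
  comm₁₂ := by
    change (d • _) ≫ (c • 𝟙 (ModuleCat.of S (S ⧸ Q))) = (c' • 𝟙 (ModuleCat.of S (S ⧸ Q'))) ≫ _
    rw [Linear.smul_comp, Linear.comp_smul, Linear.smul_comp, Category.comp_id, Category.id_comp,
      ← mul_smul, hd]
  comm₂₃ := by
    ext x
    obtain ⟨x, rfl⟩ := Ideal.Quotient.mk_surjective (I := Q') x
    rfl

theorem extFactor_extConnecting {Q' : Ideal S} {c' : S} (hQ : Q' ≤ Q) (d : S) (hd : c' = d * c)
    (h : Q' ⊔ Ideal.span {c'} ≤ Q ⊔ Ideal.span {c}) (hc' : IsSMulRegular (S ⧸ Q') c')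
    (x : Abelian.Ext (ModuleCat.of S (S ⧸ Q)) Y i) :
    extFactor h Y (i + 1) (extConnecting hc Y i x) =
      extConnecting hc' Y i (d • extFactor hQ Y i x) := by
  have hnat := congrArg (fun z ↦ Abelian.Ext.comp z x (add_comm 1 i))
    (ShortComplex.ShortExact.extClass_naturality (smulShortComplex_shortExact hc')
      (smulShortComplex_shortExact hc) (smulShortComplexMap hQ d hd h))
  have hsmul : (Abelian.Ext.mk₀ (smulShortComplexMap hQ d hd h).τ₁).comp x (zero_add i) =
      d • extFactor hQ Y i x := by
    change (Abelian.Ext.mk₀ (d • ModuleCat.ofHom (Submodule.mapQ Q' Q LinearMap.id hQ))).comp x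
      (zero_add i) = _
    rw [Abelian.Ext.mk₀_smul, Abelian.Ext.smul_comp]
    rfl
  rw [← hsmul]
  exact (Abelian.Ext.comp_assoc _ _ _ (zero_add 1) (add_comm 1 i) (by omega)).symm.trans
    (hnat.symm.trans (Abelian.Ext.comp_assoc _ _ _ (add_zero 1) (zero_add i) (by omega)))

end Connecting

section IdealSequences

variable {R : Type*} [CommRing R] {Q : ℕ → Ideal R} {P I : Ideal R} {g : R}

theorem antitone_sup_span_singleton_pow (hQ : Antitone Q) (g : R) :
    Antitone fun t ↦ Q t ⊔ Ideal.span {g ^ t} := fun _ _ h ↦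
  sup_le_sup (hQ h) (Ideal.span_singleton_le_span_singleton.mpr (pow_dvd_pow g h))

theorem radical_sup_span_singleton_le {J : Ideal R} (hJ : P ≤ J.radical) (g : R) (n : ℕ) :
    (P ⊔ Ideal.span {g}).radical ≤ (J ⊔ Ideal.span {g ^ n}).radical := by
  refine Ideal.radical_le_radical_iff.mpr (sup_le (hJ.trans (Ideal.radical_mono le_sup_left)) ?_)
  rw [Ideal.span_singleton_le_iff_mem]
  exact ⟨n, Ideal.mem_sup_right (Ideal.mem_span_singleton_self _)⟩

theorem notMem_of_radical_sup_span_singleton_ne [P.IsPrime]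
    (h : (P ⊔ Ideal.span {g}).radical ≠ P) : g ∉ P := by
  intro hg
  rw [sup_eq_left.mpr ((Ideal.span_singleton_le_iff_mem P).mpr hg), Ideal.IsPrime.radical ‹_›] at h
  exact h rfl

theorem exists_sup_span_singleton_pow_le_pow (hQ : Antitone Q) (hcof : ∀ k, ∃ t, Q t ≤ P ^ k)
    (hP : P ≤ I) (hg : g ∈ I) (k : ℕ) : ∃ t, Q t ⊔ Ideal.span {g ^ t} ≤ I ^ k := by
  obtain ⟨t, ht⟩ := hcof k
  refine ⟨t ⊔ k, sup_le ?_ ?_⟩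
  · exact (hQ le_sup_left).trans (ht.trans (Ideal.pow_right_mono hP k))
  · rw [Ideal.span_singleton_le_iff_mem]
    exact Ideal.pow_le_pow_right le_sup_right (Ideal.pow_mem_pow hg _)

end IdealSequences

section LocalizationSequence

universe u

theorem exists_exact_mkLinearMap_localCohomology {S : Type u} [CommRing S] [IsNoetherianRing S]
    {Q : ℕ → Ideal S} (hQ : Antitone Q) {P I : Ideal S} {g : S} (Y : ModuleCat.{u} S) (n : ℕ)
    (hradQ : ∀ t, P ≤ (Q t).radical) (hcofQ : ∀ k, ∃ t, Q t ≤ P ^ k)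
    (hradJ : ∀ t, I ≤ (Q t ⊔ Ideal.span {g ^ t}).radical)
    (hcofJ : ∀ k, ∃ t, Q t ⊔ Ideal.span {g ^ t} ≤ I ^ k)
    (hreg : ∀ t, IsSMulRegular (S ⧸ Q t) (g ^ t))
    (hlow : ∀ t, Subsingleton
      (Abelian.Ext (ModuleCat.of S (S ⧸ (Q t ⊔ Ideal.span {g ^ t}))) Y n))
    (hhigh : ∀ t, Subsingleton (Abelian.Ext (ModuleCat.of S (S ⧸ Q t)) Y (n + 1))) :
    Function.Injective (LocalizedModule.mkLinearMap (Submonoid.powers g)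
        ((localCohomology P n).obj Y)) ∧
      ∃ π : LocalizedModule (Submonoid.powers g) ((localCohomology P n).obj Y) →ₗ[S]
          (localCohomology I (n + 1)).obj Y, Function.Surjective π ∧
        Function.Exact (LocalizedModule.mkLinearMap (Submonoid.powers g)
          ((localCohomology P n).obj Y)) π := by
  have hJ := antitone_sup_span_singleton_pow hQ g
  have := directedSystem_extFactor hQ Y n
  obtain ⟨φ, hφ⟩ := exists_isDirectLimit_localCohomology hQ Y n hradQ hcofQ
  obtain ⟨ψ, hψ⟩ := exists_isDirectLimit_localCohomology hJ Y (n + 1) hradJ hcofJ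
  exact hφ.exists_exact_mkLinearMap hψ g (β := fun t ↦ extConnecting (hreg t) Y n)
    (fun i j hij x ↦ (extFactor_extConnecting (hreg i) Y n (hQ hij) (g ^ (j - i))
      (by rw [← pow_add, Nat.sub_add_cancel hij]) (hJ hij) (hreg j) x).symm)
    (fun t ↦ injective_lsmul_ext (hreg t) Y n) (fun t ↦ surjective_extConnecting (hreg t) Y n)
    (fun t ↦ exact_lsmul_extConnecting (hreg t) Y n)

end LocalizationSequence

section ExtRegular

universe u

open IsLocalRing

variable {S : Type u} [CommRing S] [IsRegularLocalRing S] {d i : ℕ}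
  (hd : ringKrullDim S = d)

include hd

theorem subsingleton_ext_quotient_of_lt {J : Ideal S} (hJ : maximalIdeal S ≤ J.radical)
    (hi : i < d) :
    Subsingleton (Abelian.Ext (ModuleCat.of S (S ⧸ J)) (ModuleCat.of S S) i) := by
  obtain ⟨l, rfl, hl, hreg⟩ := exists_isWeaklyRegular_ofList_eq_maximalIdeal hd
  exact subsingleton_ext_of_support_subset_of_lt hl hreg _
    (support_quotient_subset_zeroLocus_maximalIdeal hJ) hi

theorem subsingleton_ext_quotient_of_gt {J : Ideal S} (hJ : maximalIdeal S ≤ J.radical)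
    (Y : ModuleCat.{u} S) (hi : d < i) :
    Subsingleton (Abelian.Ext (ModuleCat.of S (S ⧸ J)) Y i) := by
  obtain ⟨l, rfl, hl, hreg⟩ := exists_isWeaklyRegular_ofList_eq_maximalIdeal hd
  have := hasProjectiveDimensionLT_of_support_subset hl hreg (S ⧸ J)
    (support_quotient_subset_zeroLocus_maximalIdeal hJ)
  exact HasProjectiveDimensionLT.subsingleton _ (l.length + 1) i hi _

theorem subsingleton_ext_quotient_of_isSMulRegular {Q : Ideal S} {c : S}
    (hc : IsSMulRegular (S ⧸ Q) c) (hcm : c ∈ maximalIdeal S)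
    (hQ : maximalIdeal S ≤ (Q ⊔ Ideal.span {c}).radical) (Y : ModuleCat.{u} S)
    [Module.Finite S Y] (hi : d ≤ i) :
    Subsingleton (Abelian.Ext (ModuleCat.of S (S ⧸ Q)) Y i) :=
  have := subsingleton_ext_quotient_of_gt hd hQ Y (Nat.lt_succ_of_le hi)
  subsingleton_ext_of_subsingleton_ext_succ hc Y i hcm

end ExtRegular

section Height

open IsLocalRing

variable {R : Type*} [CommRing R] [IsLocalRing R] {P : Ideal R} [P.IsPrime] {n : ℕ}
  (hdim : ringKrullDim R = n + 1) (hP : P.height = n)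

include hdim hP

theorem ne_maximalIdeal_of_height_eq : P ≠ maximalIdeal R := by
  rintro rfl
  rw [← maximalIdeal_height_eq_ringKrullDim, hP] at hdim
  norm_cast at hdim
  omega

theorem eq_maximalIdeal_of_height_eq_of_lt {q : Ideal R} (hq : q.IsPrime) (hPq : P < q) :
    q = maximalIdeal R := by
  have hle : (n + 1 : ℕ∞) ≤ q.height := hP ▸ Ideal.height_add_one_le_of_lt_of_isPrime hPq
  have hm : (maximalIdeal R).height = n + 1 := by
    have h := (maximalIdeal_height_eq_ringKrullDim (R := R)).trans hdim
    exact_mod_cast h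
  have hqm := le_maximalIdeal hq.ne_top
  have : (maximalIdeal R).FiniteHeight :=
    (maximalIdeal R).finiteHeight_iff.mpr (Or.inr (hm.trans_ne (by simp)))
  have : q.FiniteHeight := Ideal.finiteHeight_of_le hqm Ideal.IsPrime.ne_top'
  exact Ideal.eq_of_le_of_height_le q hqm (hm.trans_le hle)

end Height

theorem idealHeight_eq_height {R : Type} [CommRing R] (P : Ideal R) [hP : P.IsPrime] :
    idealHeight R P = P.height := by
  refine le_antisymm (sInf_le ⟨⟨P, hP⟩, le_rfl, (PrimeSpectrum.height_eq_orderHeight _).symm⟩)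
    (le_sInf ?_)
  rintro _ ⟨q, hq, rfl⟩
  exact (Ideal.height_mono hq).trans_eq (PrimeSpectrum.height_eq_orderHeight q)

theorem IsRegularLocal.isRegularLocalRing {R : Type} [CommRing R] [IsLocalRing R]
    (h : IsRegularLocal R) : IsRegularLocalRing R := by
  obtain ⟨_, s, hs, hcard⟩ := h
  refine IsRegularLocalRing.of_spanFinrank_maximalIdeal_le _ ?_
  rw [← hcard, ← hs]
  exact_mod_cast (Submodule.spanFinrank_span_le_ncard_of_finite s.finite_toSet).trans_eq
    (Set.ncard_coe_finset s)

open IsLocalRing in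
theorem stmt11_general {S : Type*} [CommRing S] [IsRegularLocalRing S] {n : ℕ}
    (hdim : ringKrullDim S = n + 1) (P : Ideal S) [P.IsPrime] (hP : P.height = n) (g : S)
    (hprim : (P ⊔ Ideal.span {g}).radical = maximalIdeal S) :
    Function.Injective (LocalizedModule.mkLinearMap (Submonoid.powers g)
        ((localCohomology P n).obj (ModuleCat.of S S))) ∧
      ∃ π : LocalizedModule (Submonoid.powers g) ((localCohomology P n).obj (ModuleCat.of S S))
          →ₗ[S] (localCohomology (maximalIdeal S) (n + 1)).obj (ModuleCat.of S S),
        Function.Surjective π ∧ LinearMap.ker π = LinearMap.range (LocalizedModule.mkLinearMap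
          (Submonoid.powers g) ((localCohomology P n).obj (ModuleCat.of S S))) := by
  have hd : ringKrullDim S = (n + 1 : ℕ) := by exact_mod_cast hdim
  have hgm : g ∈ maximalIdeal S :=
    hprim ▸ Ideal.le_radical (Ideal.mem_sup_right (Ideal.mem_span_singleton_self g))
  have hPm : P ≠ maximalIdeal S := ne_maximalIdeal_of_height_eq hdim hP
  have hgP : g ∉ P := notMem_of_radical_sup_span_singleton_ne (hprim.trans_ne hPm.symm)
  have hgt (t : ℕ) : g ^ t ∉ P := mt (Ideal.IsPrime.mem_of_pow_mem ‹_› t) hgP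
  have hrad (s t : ℕ) : maximalIdeal S ≤ (symbolicPower P t ⊔ Ideal.span {g ^ s}).radical :=
    hprim ▸ radical_sup_span_singleton_le (le_radical_symbolicPower P t) g s
  have hQ := symbolicPower_antitone P
  have hcof := exists_symbolicPower_le_pow fun _ ↦ eq_maximalIdeal_of_height_eq_of_lt hdim hP
  simp only [← LinearMap.exact_iff]
  exact exists_exact_mkLinearMap_localCohomology hQ (ModuleCat.of S S) n
    (le_radical_symbolicPower P) hcof (fun t ↦ hrad t t)
    (exists_sup_span_singleton_pow_le_pow hQ hcof (le_maximalIdeal Ideal.IsPrime.ne_top') hgm)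
    (fun t ↦ isSMulRegular_quotient_symbolicPower (hgt t) t)
    (fun t ↦ subsingleton_ext_quotient_of_lt hd (hrad t t) (lt_add_one n))
    (fun t ↦ subsingleton_ext_quotient_of_isSMulRegular hd
      (isSMulRegular_quotient_symbolicPower hgP t) hgm (by simpa using hrad 1 t) _ le_rfl)

/-- Regular local ring `(S, n)` of dimension `e ≥ 1` containing a field,
`P` a prime of height `e - 1`, `g ∈ n` with `P + (g)` being `n`-primary.  Then there is a
short exact sequence `0 → H_P^{e-1}(S) → (H_P^{e-1}(S))_g → H_n^e(S) → 0` whose first map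
is the natural localization map. -/
theorem stmt11 (S : Type) [CommRing S] [IsLocalRing S]
    (hreg : IsRegularLocal S) (hfield : ContainsField S)
    (e : ℕ) (he : 1 ≤ e) (hdim : ringKrullDim S = (e : WithBot ℕ∞))
    (P : Ideal S) [P.IsPrime] (hP : idealHeight S P = ((e - 1 : ℕ) : ℕ∞))
    (g : S) (hg : g ∈ IsLocalRing.maximalIdeal S)
    (hprim : (P ⊔ Ideal.span {g}).radical = IsLocalRing.maximalIdeal S) :
    Function.Injective
        (LocalizedModule.mkLinearMap (Submonoid.powers g) (LocalCohomologyMod S P (e - 1))) ∧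
      ∃ π : LocalizedModule (Submonoid.powers g) (LocalCohomologyMod S P (e - 1)) →ₗ[S]
          LocalCohomologyMod S (IsLocalRing.maximalIdeal S) e,
        Function.Surjective π ∧
          LinearMap.ker π =
            LinearMap.range
              (LocalizedModule.mkLinearMap (Submonoid.powers g)
                (LocalCohomologyMod S P (e - 1))) := by
  obtain ⟨n, rfl⟩ := Nat.exists_eq_add_of_le' he
  have := hreg.isRegularLocalRing
  exact stmt11_general (by exact_mod_cast hdim) P (idealHeight_eq_height P ▸ hP) g hprim
end

section
/- Let R be a commutative Noetherian ring, let M be an R-module with inj.dim_R(M) ≤ c, let p be a prime ideal of R, and let g ∈ R. Then the natural localization map H_p^c(M) → (H_p^c(M))_g is surjective. -/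
open CategoryTheory Opposite

noncomputable section

/-!
If `inj.dim M ≤ c`, then `Ext^(c+1)(-, M) = 0`, so `Ext^c(-, M)` turns monomorphisms into
surjections. For a Noetherian module `B` and `s : R`, the kernels of the powers of `s` on `B`
stabilise, so for large `n` multiplication by `s` is injective on `s ^ n B`, and hence surjective on
`Ext^c(s ^ n B, M)`. As `s ^ n` on `B` factors through `s ^ n B`, every `x` in `Ext^c(B, M)`
satisfies `s ^ (n + 1) y = s ^ n x` for some `y`, which says that `Ext^c(B, M)` surjects onto its
localizations. This passes to the filtered colimit of the `Ext^c(R ⧸ I ^ t, M)`.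

Local cohomology uses the `Ext` of derived functors, while long exact sequences are available for
the `Abelian.Ext` of derived categories; a projective resolution identifies the two.
-/

universe w v u

section LocalizedModule

variable {R : Type*} [CommRing R] {S : Submonoid R} {N : Type*} [AddCommGroup N] [Module R N]

lemma surjective_mkLinearMap_iff :
    Function.Surjective (LocalizedModule.mkLinearMap S N) ↔
      ∀ (x : N), ∀ s ∈ S, ∃ y : N, ∃ t ∈ S, (t * s) • y = t • x := by
  have mk_one_eq_mk (x y : N) (s : S) :
      LocalizedModule.mkLinearMap S N y = LocalizedModule.mk x s ↔
        ∃ t ∈ S, (t * (s : R)) • y = t • x := by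
    simp [LocalizedModule.mk_eq, Submonoid.smul_def, mul_smul]
  constructor
  · intro h x s hs
    obtain ⟨y, hy⟩ := h (LocalizedModule.mk x ⟨s, hs⟩)
    exact ⟨y, (mk_one_eq_mk x y ⟨s, hs⟩).1 hy⟩
  · intro h z
    induction z using LocalizedModule.induction_on with
    | h x s =>
      obtain ⟨y, hy⟩ := h x s s.2
      exact ⟨y, (mk_one_eq_mk x y s).2 hy⟩

lemma surjective_mkLinearMap_of_jointly_surjective {ι : Type*} {L : ι → Type*}
    [∀ i, AddCommGroup (L i)] [∀ i, Module R (L i)] (φ : ∀ i, L i →ₗ[R] N)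
    (hφ : ∀ x, ∃ i y, φ i y = x)
    (hL : ∀ i, Function.Surjective (LocalizedModule.mkLinearMap S (L i))) :
    Function.Surjective (LocalizedModule.mkLinearMap S N) := by
  refine surjective_mkLinearMap_iff.2 fun x s hs ↦ ?_
  obtain ⟨i, x, rfl⟩ := hφ x
  obtain ⟨y, t, ht, hy⟩ := surjective_mkLinearMap_iff.1 (hL i) x s hs
  exact ⟨φ i y, t, ht, by rw [← map_smul, hy, map_smul]⟩

end LocalizedModule

section Comparison

variable {R : Type*} [CommRing R] {C : Type u} [Category.{v} C] [Abelian C] [Linear R C]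
  {X Y : C} (P : ProjectiveResolution X) (n : ℕ)

lemma linearYonedaObj_sc_g_eq_zero_iff (f : P.complex.X n ⟶ Y) :
    ((P.complex.linearYonedaObj R Y).sc n).g.hom f = 0 ↔ P.complex.d (n + 1) n ≫ f = 0 := by
  change P.complex.d ((ComplexShape.up ℕ).next n) n ≫ f = 0 ↔ _
  rw [CochainComplex.next]

variable [HasExt.{w} C]

lemma extMk_degree_zero_eq_zero_iff (f : P.complex.X 0 ⟶ Y) (hf : P.complex.d 1 0 ≫ f = 0) :
    P.extMk f 1 rfl hf = 0 ↔ f = 0 := by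
  refine ⟨fun h ↦ ?_, fun h ↦ by simp [h]⟩
  simp only [← P.extEquivCohomologyClass.apply_eq_iff_eq,
    ProjectiveResolution.extEquivCohomologyClass_extMk,
    ProjectiveResolution.extEquivCohomologyClass_zero,
    CochainComplex.HomComplex.CohomologyClass.mk_eq_zero_iff,
    CochainComplex.HomComplex.Cocycle.toSingleMk_mem_coboundaries_iff _ _ _ _ _ 1 (zero_add 1)]
    at h
  obtain ⟨g, hg⟩ := h
  -- The resolution vanishes in cohomological degree 1, so in degree 0 only `0` is a coboundary.
  have hg_zero : g = 0 := (P.cochainComplex.isZero_of_isStrictlyLE 0 1 zero_lt_one).eq_of_src _ _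
  rw [← cancel_epi (P.cochainComplexXIso 0 0 rfl).hom]
  simpa [hg_zero] using hg.symm

lemma smul_extMk (r : R) (f : P.complex.X n ⟶ Y) (hf : P.complex.d (n + 1) n ≫ f = 0) :
    r • P.extMk f (n + 1) rfl hf = P.extMk (r • f) (n + 1) rfl (by simp [hf]) := by
  rw [Abelian.Ext.smul_eq_comp_mk₀, P.extMk_comp_mk₀]
  simp

lemma extMk_eq_zero_iff_mem_range (f : P.complex.X n ⟶ Y)
    (hf : P.complex.d (n + 1) n ≫ f = 0) :
    P.extMk f (n + 1) rfl hf = 0 ↔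
      f ∈ LinearMap.range ((P.complex.linearYonedaObj R Y).sc n).f.hom := by
  change _ ↔ ∃ u : P.complex.X ((ComplexShape.up ℕ).prev n) ⟶ Y, P.complex.d n _ ≫ u = f
  cases n with
  | zero =>
    rw [extMk_degree_zero_eq_zero_iff P f hf]
    simp [eq_comm]
  | succ n => rw [P.extMk_eq_zero_iff _ _ _ _ n rfl, CochainComplex.prev_nat_succ]

variable (R Y) in
/-- The class in the derived category `Ext` of a degree `n` cocycle of the complex `Hom(P, Y)`. -/
def cocycleClass :
    LinearMap.ker ((P.complex.linearYonedaObj R Y).sc n).g.hom →ₗ[R] Abelian.Ext X Y n where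
  toFun z := P.extMk z.1 (n + 1) rfl ((linearYonedaObj_sc_g_eq_zero_iff P n z.1).1 z.2)
  map_add' _ _ := (P.add_extMk _ _ _ _ _ _).symm
  map_smul' _ _ := (smul_extMk P n _ _ _).symm

lemma cocycleClass_surjective : Function.Surjective (cocycleClass R Y P n) := fun α ↦ by
  obtain ⟨f, hf, rfl⟩ := P.extMk_surjective α (n + 1) rfl
  exact ⟨⟨f, (linearYonedaObj_sc_g_eq_zero_iff P n f).2 hf⟩, rfl⟩

lemma ker_cocycleClass :
    LinearMap.ker (cocycleClass R Y P n) =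
      LinearMap.range ((P.complex.linearYonedaObj R Y).sc n).moduleCatToCycles := by
  ext z
  have hz := (linearYonedaObj_sc_g_eq_zero_iff P n z.1).1 z.2
  exact (extMk_eq_zero_iff_mem_range P n z.1 hz).trans
    (exists_congr fun _ ↦ Iff.symm Subtype.ext_iff)

variable (R X Y) in
/-- The `Ext` of left derived functors agrees with the `Ext` of the derived category: both are
the cohomology of `Hom(P, Y)` for a projective resolution `P` of `X`. -/
def extLinearEquivAbelianExt [EnoughProjectives C] :
    ((Ext R C n).obj (op X)).obj Y ≃ₗ[R] Abelian.Ext X Y n :=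
  let P := projectiveResolution X
  (P.isoExt n Y).toLinearEquiv ≪≫ₗ
    ((P.complex.linearYonedaObj R Y).sc n).moduleCatHomologyIso.toLinearEquiv ≪≫ₗ
    Submodule.quotEquivOfEq _ _ (ker_cocycleClass P n).symm ≪≫ₗ
    (cocycleClass R Y P n).quotKerEquivOfSurjective (cocycleClass_surjective P n)

end Comparison

lemma injDimLE.hasInjectiveDimensionLE {R : Type} [CommRing R] {M : Type} [AddCommGroup M]
    [Module R M] {c : ℕ} (h : injDimLE R M c) : HasInjectiveDimensionLE (ModuleCat.of R M) c :=
  hasInjectiveDimensionLT_of_enoughProjectives _ _ fun N ↦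
    have := h N (c + 1) c.lt_succ_self
    (extLinearEquivAbelianExt R N (ModuleCat.of R M) (c + 1)).symm.subsingleton

section TopExt

variable {C : Type u} [Category.{v} C] [Abelian C] [HasExt.{w} C] {A B M : C}
  {c : ℕ} [HasInjectiveDimensionLE M c]

lemma surjective_mk₀_comp_of_mono (f : A ⟶ B) [Mono f] :
    Function.Surjective fun y : Abelian.Ext B M c ↦ (Abelian.Ext.mk₀ f).comp y (zero_add c) :=
  fun x ↦
    have hf : (ShortComplex.mk f (Limits.cokernel.π f) (Limits.cokernel.condition f)).ShortExact :=
      { exact := ShortComplex.exact_cokernel f }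
    Abelian.Ext.contravariant_sequence_exact₁ hf M x (add_comm 1 c)
      (Abelian.Ext.eq_zero_of_hasInjectiveDimensionLT _ (c + 1) le_rfl)

lemma exists_smul_eq_smul_of_factor {R : Type*} [CommRing R] [Linear R C] {a b : R}
    (π : B ⟶ A) (ι : A ⟶ B) (hπι : π ≫ ι = a • 𝟙 B) [Mono (b • 𝟙 A)] (x : Abelian.Ext B M c) :
    ∃ y : Abelian.Ext B M c, b • y = a • x := by
  obtain ⟨z, hz⟩ := surjective_mk₀_comp_of_mono (b • 𝟙 A)
    ((Abelian.Ext.mk₀ ι).comp x (zero_add c))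
  replace hz : b • z = (Abelian.Ext.mk₀ ι).comp x (zero_add c) := by
    simpa [Abelian.Ext.mk₀_smul, Abelian.Ext.smul_comp] using hz
  refine ⟨(Abelian.Ext.mk₀ π).comp z (zero_add c), ?_⟩
  rw [← Abelian.Ext.comp_smul, hz, Abelian.Ext.mk₀_comp_mk₀_assoc, hπι,
    Abelian.Ext.mk₀_smul, Abelian.Ext.smul_comp, Abelian.Ext.mk₀_id_comp]

end TopExt

section Noetherian

variable {R : Type u} [CommRing R]

lemma exists_isSMulRegular_range_pow (B : Type*) [AddCommGroup B] [Module R B] [IsNoetherian R B]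
    (s : R) :
    ∃ n : ℕ, IsSMulRegular (LinearMap.range (algebraMap R (Module.End R B) (s ^ n))) s := by
  obtain ⟨n, hn, hn_pos⟩ :=
    ((algebraMap R (Module.End R B) s).eventually_disjoint_ker_pow_range_pow.and
      (Filter.eventually_gt_atTop 0)).exists
  rw [← map_pow, Submodule.disjoint_def] at hn
  refine ⟨n, (isSMulRegular_iff_right_eq_zero_of_smul).2 fun ⟨b, hb⟩ hsb ↦ Subtype.ext ?_⟩
  refine hn b ?_ hb
  obtain ⟨k, rfl⟩ := Nat.exists_eq_succ_of_ne_zero hn_pos.ne'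
  have hsb' : s • b = 0 := congrArg Subtype.val hsb
  simp [pow_succ, hsb']

variable {M : ModuleCat.{u} R} {c : ℕ} [HasInjectiveDimensionLE M c] (S : Submonoid R)

lemma surjective_mkLinearMap_abelianExt (B : ModuleCat.{u} R) [IsNoetherian R B] :
    Function.Surjective (LocalizedModule.mkLinearMap S (Abelian.Ext B M c)) := by
  refine surjective_mkLinearMap_iff.2 fun x s hs ↦ ?_
  obtain ⟨n, hn⟩ := exists_isSMulRegular_range_pow B s
  let φ : Module.End R B := algebraMap R (Module.End R B) (s ^ n)
  have : Mono ((s ^ n * s) • 𝟙 (ModuleCat.of R (LinearMap.range φ))) :=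
    (ModuleCat.mono_iff_injective _).2 ((hn.pow n).mul hn)
  obtain ⟨y, hy⟩ := exists_smul_eq_smul_of_factor (a := s ^ n) (b := s ^ n * s)
    (ModuleCat.ofHom φ.rangeRestrict) (ModuleCat.ofHom (LinearMap.range φ).subtype) rfl x
  exact ⟨y, s ^ n, pow_mem hs n, hy⟩

lemma surjective_mkLinearMap_ext (B : ModuleCat.{u} R) [IsNoetherian R B] :
    Function.Surjective
      (LocalizedModule.mkLinearMap S (((Ext R (ModuleCat.{u} R) c).obj (op B)).obj M)) :=
  let e := extLinearEquivAbelianExt R B M c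
  surjective_mkLinearMap_of_jointly_surjective (fun _ : Unit ↦ e.symm.toLinearMap)
    (fun x ↦ ⟨(), e.symm.surjective x⟩) fun _ ↦ surjective_mkLinearMap_abelianExt S B

end Noetherian

lemma localCohomology_jointly_surjective {R : Type u} [CommRing R] (I : Ideal R) (c : ℕ)
    (M : ModuleCat.{u} R) :
    ∃ φ : ∀ t : ℕ, ((Ext R (ModuleCat.{u} R) c).obj (op (ModuleCat.of R (R ⧸ I ^ t)))).obj M →ₗ[R]
        (localCohomology I c).obj M,
      ∀ x, ∃ t y, φ t y = x := by
  let D := localCohomology.diagram (localCohomology.idealPowersDiagram I) c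
  let E := (evaluation (ModuleCat.{u} R) (ModuleCat.{u} R)).obj M
  have hE : Limits.IsColimit (E.mapCocone (Limits.colimit.cocone D)) :=
    Limits.isColimitOfPreserves E (Limits.colimit.isColimit D)
  refine ⟨fun t ↦ ((E.mapCocone (Limits.colimit.cocone D)).ι.app (op (op t))).hom, fun x ↦ ?_⟩
  have := Limits.preservesSmallestFilteredColimits_of_preservesFilteredColimits
    (forget (ModuleCat.{u} R))
  obtain ⟨i, y, hy⟩ := Limits.Concrete.isColimit_exists_rep _ hE x
  exact ⟨i.unop.unop, y, hy⟩

theorem stmt15_general {R : Type u} [CommRing R] [IsNoetherianRing R] (M : ModuleCat.{u} R) (c : ℕ)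
    [HasInjectiveDimensionLE M c] (I : Ideal R) (S : Submonoid R) :
    Function.Surjective (LocalizedModule.mkLinearMap S ((localCohomology I c).obj M)) := by
  obtain ⟨φ, hφ⟩ := localCohomology_jointly_surjective I c M
  exact surjective_mkLinearMap_of_jointly_surjective φ hφ fun t ↦
    surjective_mkLinearMap_ext S (ModuleCat.of R (R ⧸ I ^ t))

/-- `R` Noetherian, `M` an `R`-module with `inj.dim_R M ≤ c`, `p` a prime,
`g ∈ R`.  Then the natural localization map `H_p^c(M) → (H_p^c(M))_g` is surjective. -/
theorem stmt15 (R : Type) [CommRing R] [IsNoetherianRing R]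
    (M : Type) [AddCommGroup M] [Module R M] (c : ℕ)
    (hinj : injDimLE R M c)
    (p : Ideal R) [p.IsPrime] (g : R) :
    Function.Surjective
      (LocalizedModule.mkLinearMap (Submonoid.powers g)
        ((localCohomology p c).obj (ModuleCat.of R M))) := by
  have := hinj.hasInjectiveDimensionLE
  exact stmt15_general (ModuleCat.of R M) c p (Submonoid.powers g)

end
end
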